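/- arXiv:0706.3905 — 4 statements merged into one kernel-verified Lean document; each statement's English description precedes it below -/
import Mathlib

section
/- Let U be an open connected subset of ℝⁿ and let f : U → ℝⁿ be differentiable, i.e. at every x ∈ U there is a continuous linear map f′(x) : ℝⁿ → ℝⁿ with HasFDerivAt f (f′(x)) x. Let x₀, x₁ ∈ U, α ∈ ℝ, and let n₀ be an odd natural number and n₁ an even natural number. Suppose there are real polynomials q₀ and q₁ such that for every λ ∈ ℝ: det(f′(x₀) − λ·id) = q₀(λ)·(α − λ)^{n₀} and det(f′(x₁) − λ·id) = q₁(λ)·(α − λ)^{n₁}, and suppose q₀(α)·q₁(α) > 0. Then there exists δ > 0 such that for every λ ∈ (α, α + δ) there exists x₂ ∈ U with det(f′(x₂) − λ·id) = 0. -/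
open Set Filter Topology MeasureTheory

/-- interpolation of the determinant -/
lemma det_interp {n : ℕ} (v : ℕ → ℝ) (hv : Function.Injective v) :
    ∃ w : ℕ → ℝ, ∀ M : EuclideanSpace ℝ (Fin n) →L[ℝ] EuclideanSpace ℝ (Fin n),
      M.det = ∑ i ∈ Finset.range (n + 1),
        w i * (v i • ContinuousLinearMap.id ℝ (EuclideanSpace ℝ (Fin n)) + M).det := by
  refine ⟨fun i => (Lagrange.basis (Finset.range (n+1)) v i).eval 0, fun M => ?_⟩
  have hp : ∀ s : ℝ, (s • ContinuousLinearMap.id ℝ (EuclideanSpace ℝ (Fin n)) + M).det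
      = (LinearMap.charpoly (-(M : EuclideanSpace ℝ (Fin n) →ₗ[ℝ] EuclideanSpace ℝ (Fin n)))).eval s := by
    intro s
    rw [LinearMap.eval_charpoly]
    rw [ContinuousLinearMap.det]
    congr 1
    ext x
    simp [Module.algebraMap_end_apply]
  have hd : (LinearMap.charpoly (-(M : EuclideanSpace ℝ (Fin n) →ₗ[ℝ] EuclideanSpace ℝ (Fin n)))).degree
      < (Finset.range (n+1)).card := by
    rw [Polynomial.degree_eq_natDegree (LinearMap.charpoly_monic _).ne_zero,
      LinearMap.charpoly_natDegree]
    simp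
    exact_mod_cast Nat.lt_succ_self n
  have h0 := hp 0
  rw [Lagrange.eq_interpolate (v := v) hv.injOn hd] at h0
  have e0 : (0 : ℝ) • ContinuousLinearMap.id ℝ (EuclideanSpace ℝ (Fin n)) + M = M := by
    ext x; simp
  rw [e0] at h0
  rw [h0, Lagrange.interpolate_apply, Polynomial.eval_finsetSum]
  refine Finset.sum_congr rfl fun i _ => ?_
  rw [hp, Polynomial.eval_mul, Polynomial.eval_C, mul_comm]

lemma det_pos_large {n : ℕ} (K : ℝ) : ∃ s₀ : ℝ, 0 < s₀ ∧ ∀ s, s₀ ≤ s →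
    ∀ M : EuclideanSpace ℝ (Fin n) →L[ℝ] EuclideanSpace ℝ (Fin n), ‖M‖ ≤ K →
      0 < (s • ContinuousLinearMap.id ℝ (EuclideanSpace ℝ (Fin n)) + M).det := by
  have h1 : ∀ᶠ N in 𝓝 (ContinuousLinearMap.id ℝ (EuclideanSpace ℝ (Fin n))), 0 < N.det := by
    apply (ContinuousLinearMap.continuous_det).continuousAt.eventually
    apply lt_mem_nhds
    simp [ContinuousLinearMap.det]
  obtain ⟨δ, hδ, hball⟩ := Metric.eventually_nhds_iff.1 h1
  refine ⟨(|K| + 1) / δ, by positivity, fun s hs M hM => ?_⟩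
  have hspos : 0 < s := lt_of_lt_of_le (by positivity) hs
  have e : s • ContinuousLinearMap.id ℝ (EuclideanSpace ℝ (Fin n)) + M
      = s • (ContinuousLinearMap.id ℝ (EuclideanSpace ℝ (Fin n)) + s⁻¹ • M) := by
    rw [smul_add, smul_smul, mul_inv_cancel₀ hspos.ne', one_smul]
  rw [e, ContinuousLinearMap.det, ContinuousLinearMap.toLinearMap_smul, LinearMap.det_smul]
  apply mul_pos (by positivity)
  apply hball
  rw [dist_eq_norm, add_sub_cancel_left, norm_smul, norm_inv, Real.norm_of_nonneg hspos.le,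
    inv_mul_lt_iff₀ hspos]
  rw [div_le_iff₀ hδ] at hs
  linarith [le_abs_self K]

lemma null_lagrangian_large {n : ℕ}
    (F G : EuclideanSpace ℝ (Fin n) → EuclideanSpace ℝ (Fin n)) (hF : ContDiff ℝ 1 F)
    (hG : ContDiff ℝ 1 G) (K : NNReal) (hFL : LipschitzWith K F) (hGL : LipschitzWith K G) (R : ℝ)
    (hFG : ∀ x, x ∉ Metric.closedBall 0 R → F x = G x) (s : ℝ) (hsK : K < s)
    (hdet : ∀ M : EuclideanSpace ℝ (Fin n) →L[ℝ] EuclideanSpace ℝ (Fin n), ‖M‖ ≤ K →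
      0 < (s • ContinuousLinearMap.id ℝ (EuclideanSpace ℝ (Fin n)) + M).det) :
    ∫ x in Metric.closedBall 0 R, (s • ContinuousLinearMap.id ℝ _ + fderiv ℝ F x).det =
    ∫ x in Metric.closedBall 0 R, (s • ContinuousLinearMap.id ℝ _ + fderiv ℝ G x).det := by
  have hs0 : 0 < s := lt_of_le_of_lt K.2 hsK
  have key : ∀ H : EuclideanSpace ℝ (Fin n) → EuclideanSpace ℝ (Fin n), ContDiff ℝ 1 H →
      LipschitzWith K H → Function.Bijective (fun x => s • x + H x) ∧
      ∫ x in Metric.closedBall 0 R, (s • ContinuousLinearMap.id ℝ _ + fderiv ℝ H x).det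
       = (volume ((fun x => s • x + H x) '' Metric.closedBall 0 R)).toReal := by
    intro H hH hL
    have hbij : Function.Bijective (fun x => s • x + H x) := by
      constructor
      · intro x y hxy
        simp only at hxy
        have h1 : s • (x - y) = H y - H x := by
          rw [smul_sub, sub_eq_sub_iff_add_eq_add, hxy, add_comm]
        have h2 : s * ‖x - y‖ ≤ K * ‖x - y‖ := by
          have := hL.dist_le_mul y x
          rw [dist_eq_norm, dist_eq_norm, ← h1, norm_smul, Real.norm_of_nonneg hs0.le,
            norm_sub_rev y x] at this
          exact this
        by_contra hne
        have : 0 < ‖x - y‖ := norm_pos_iff.2 (sub_ne_zero.2 hne)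
        nlinarith
      · intro y
        -- contraction x ↦ s⁻¹ (y - H x)
        have hc : ContractingWith (‖s⁻¹‖₊ * K) (fun x => s⁻¹ • (y - H x)) := by
          constructor
          · rw [← NNReal.coe_lt_coe]
            push_cast
            rw [norm_inv, Real.norm_of_nonneg hs0.le, inv_mul_lt_iff₀ hs0]
            simpa using hsK
          · apply LipschitzWith.of_dist_le_mul
            intro a b
            rw [dist_eq_norm, ← smul_sub, sub_sub_sub_cancel_left, norm_smul]
            push_cast
            rw [mul_assoc]
            gcongr
            have := hL.dist_le_mul b a
            rw [dist_comm b a, dist_eq_norm] at this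
            exact this
        refine ⟨hc.fixedPoint, ?_⟩
        have := hc.fixedPoint_isFixedPt
        rw [Function.IsFixedPt] at this
        simp only
        nth_rewrite 1 [← this]
        rw [smul_smul, mul_inv_cancel₀ hs0.ne', one_smul, sub_add_cancel]
    refine ⟨hbij, ?_⟩
    have hd : ∀ x ∈ Metric.closedBall (0 : EuclideanSpace ℝ (Fin n)) R,
        HasFDerivWithinAt (fun x => s • x + H x)
        (s • ContinuousLinearMap.id ℝ _ + fderiv ℝ H x) (Metric.closedBall 0 R) x := by
      intro x _
      exact (((hasFDerivAt_id x).const_smul s).add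
        (hH.differentiable (by norm_num) x).hasFDerivAt).hasFDerivWithinAt
    have h := integral_image_eq_integral_abs_det_fderiv_smul volume
      (Metric.isClosed_closedBall.measurableSet) hd hbij.1.injOn (fun _ => (1:ℝ))
    rw [setIntegral_const, smul_eq_mul, mul_one] at h
    rw [Measure.real] at h
    rw [h]
    refine integral_congr_ae (Eventually.of_forall fun x => ?_)
    simp only [smul_eq_mul, mul_one]
    rw [abs_of_pos]
    exact hdet _ (norm_fderiv_le_of_lipschitz ℝ hL)
  obtain ⟨bF, iF⟩ := key F hF hFL
  obtain ⟨bG, iG⟩ := key G hG hGL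
  rw [iF, iG]
  congr 2
  apply compl_injective
  rw [← image_compl_eq bF, ← image_compl_eq bG]
  apply image_congr
  intro x hx
  rw [hFG x hx]

lemma cont_det {n : ℕ} (H : EuclideanSpace ℝ (Fin n) → EuclideanSpace ℝ (Fin n))
    (hH : ContDiff ℝ 1 H) (s : ℝ) :
    Continuous fun x => (s • ContinuousLinearMap.id ℝ _ + fderiv ℝ H x).det :=
  ContinuousLinearMap.continuous_det.comp
    (continuous_const.add (hH.continuous_fderiv (by norm_num)))

lemma null_lagrangian {n : ℕ}
    (F G : EuclideanSpace ℝ (Fin n) → EuclideanSpace ℝ (Fin n)) (hF : ContDiff ℝ 1 F)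
    (hG : ContDiff ℝ 1 G) (K : NNReal) (hFL : LipschitzWith K F) (hGL : LipschitzWith K G) (R : ℝ)
    (hFG : ∀ x, x ∉ Metric.closedBall 0 R → F x = G x) :
    ∫ x in Metric.closedBall 0 R, (fderiv ℝ F x).det =
    ∫ x in Metric.closedBall 0 R, (fderiv ℝ G x).det := by
  obtain ⟨s₀, hs₀, hs⟩ := det_pos_large (n := n) K
  obtain ⟨w, hw⟩ := det_interp (n := n) (fun i => s₀ + K + 1 + i)
    (by intro i j h; simpa using h)
  have key : ∀ H : EuclideanSpace ℝ (Fin n) → EuclideanSpace ℝ (Fin n), ContDiff ℝ 1 H →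
      ∫ x in Metric.closedBall 0 R, (fderiv ℝ H x).det = 
      ∑ i ∈ Finset.range (n+1), w i * ∫ x in Metric.closedBall 0 R, 
        ((s₀ + K + 1 + i : ℝ) • ContinuousLinearMap.id ℝ _ + fderiv ℝ H x).det := by
    intro H hH
    simp_rw [← integral_const_mul]
    rw [← integral_finsetSum]
    · exact integral_congr_ae (Eventually.of_forall fun x => hw _)
    · intro i _
      apply Integrable.const_mul
      exact (cont_det H hH _).continuousOn.integrableOn_compact (isCompact_closedBall _ _)
  rw [key F hF, key G hG]
  refine Finset.sum_congr rfl fun i _ => ?_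
  congr 1
  have hi : (0:ℝ) ≤ i := by positivity
  have hK : (0:ℝ) ≤ K := K.2
  exact null_lagrangian_large F G hF hG K hFL hGL R hFG _ (by linarith)
    (hs _ (by linarith))

/-- A degree-type statement for C¹ maps equal to the identity outside a ball. -/
lemma degree_smooth {n : ℕ} (g : EuclideanSpace ℝ (Fin n) → EuclideanSpace ℝ (Fin n))
    (hg : ContDiff ℝ 1 g) (R : ℝ) (hgid : ∀ x, x ∉ Metric.closedBall 0 R → g x = x)
    (y : EuclideanSpace ℝ (Fin n)) (ρ : ℝ) (hρ : 0 < ρ)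
    (hneg : ∀ x, (∀ i, |g x i - y i| < ρ) → (fderiv ℝ g x).det ≤ 0) : False := by
  obtain ⟨P, hP⟩ : ∃ P : NNReal, (P : ℝ) = ρ := ⟨ρ.toNNReal, Real.coe_toNNReal _ hρ.le⟩
  let b : Fin n → ℝ → ℝ := fun i t => max 0 (ρ - |t - y i|)
  have hbc : ∀ i, Continuous (b i) := fun i => by fun_prop
  have hb0 : ∀ i t, 0 ≤ b i t := fun i t => le_max_left _ _
  have hbρ : ∀ i t, b i t ≤ ρ := fun i t => max_le hρ.le (by linarith [abs_nonneg (t - y i)])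
  let S : Fin n → ℝ → ℝ := fun i t => ∫ u in (0:ℝ)..t, b i u
  have hS : ∀ i t, HasDerivAt (S i) (b i t) t := fun i t =>
    intervalIntegral.integral_hasDerivAt_right ((hbc i).intervalIntegrable _ _)
      ((hbc i).stronglyMeasurableAtFilter _ _) (hbc i).continuousAt
  have hSC : ∀ i, ContDiff ℝ 1 (S i) := by
    intro i
    rw [contDiff_one_iff_deriv]
    refine ⟨fun t => (hS i t).differentiableAt, ?_⟩
    rw [show deriv (S i) = b i from funext fun t => (hS i t).deriv]
    exact hbc i
  have hSL : ∀ i, LipschitzWith P (S i) := by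
    intro i
    apply lipschitzWith_of_nnnorm_deriv_le (fun t => (hS i t).differentiableAt)
    intro t
    rw [(hS i t).deriv, ← NNReal.coe_le_coe, coe_nnnorm, Real.norm_of_nonneg (hb0 i t), hP]
    exact hbρ i t
  let Φ : EuclideanSpace ℝ (Fin n) → EuclideanSpace ℝ (Fin n) :=
    fun x => WithLp.toLp 2 (fun i => S i (x i))
  have hΦC : ContDiff ℝ 1 Φ := by
    rw [contDiff_euclidean]
    intro i
    exact (hSC i).comp (EuclideanSpace.proj i : EuclideanSpace ℝ (Fin n) →L[ℝ] ℝ).contDiff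
  have hΦL : LipschitzWith P Φ := by
    apply LipschitzWith.of_dist_le_mul
    intro a c
    rw [EuclideanSpace.dist_eq, EuclideanSpace.dist_eq]
    apply Real.sqrt_le_iff.2
    refine ⟨by positivity, ?_⟩
    rw [mul_pow, Real.sq_sqrt (by positivity), Finset.mul_sum]
    refine Finset.sum_le_sum fun i _ => ?_
    rw [← mul_pow]
    exact pow_le_pow_left₀ dist_nonneg ((hSL i).dist_le_mul _ _) 2
  have hΦdet : ∀ x, (fderiv ℝ Φ x).det = ∏ i, b i (x i) := by
    intro x
    have hd : HasFDerivAt Φ (fderiv ℝ Φ x) x := (hΦC.differentiable (by norm_num) x).hasFDerivAt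
    rw [ContinuousLinearMap.det,
      ← LinearMap.det_toMatrix (EuclideanSpace.basisFun (Fin n) ℝ).toBasis]
    rw [show LinearMap.toMatrix (EuclideanSpace.basisFun (Fin n) ℝ).toBasis
      (EuclideanSpace.basisFun (Fin n) ℝ).toBasis
      (fderiv ℝ Φ x : EuclideanSpace ℝ (Fin n) →ₗ[ℝ] EuclideanSpace ℝ (Fin n))
        = Matrix.diagonal (fun i => b i (x i)) from ?_, Matrix.det_diagonal]
    ext i j
    have h1 : HasFDerivAt (fun z => Φ z i)
        ((EuclideanSpace.proj i : EuclideanSpace ℝ (Fin n) →L[ℝ] ℝ).comp (fderiv ℝ Φ x)) x :=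
      (EuclideanSpace.proj i : EuclideanSpace ℝ (Fin n) →L[ℝ] ℝ).hasFDerivAt.comp x hd
    have h2 : HasFDerivAt (fun z => Φ z i)
        (b i (x i) • (EuclideanSpace.proj i : EuclideanSpace ℝ (Fin n) →L[ℝ] ℝ)) x :=
      HasDerivAt.comp_hasFDerivAt (h₂ := S i)
        (f := fun z : EuclideanSpace ℝ (Fin n) => z i) x (hS i (x i))
        (EuclideanSpace.proj i : EuclideanSpace ℝ (Fin n) →L[ℝ] ℝ).hasFDerivAt
    have h3 := DFunLike.congr_fun (h1.unique h2) (EuclideanSpace.single j 1)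
    simp only [ContinuousLinearMap.comp_apply, PiLp.proj_apply,
      smul_apply] at h3
    rw [LinearMap.toMatrix_apply]
    simp [Matrix.diagonal_apply] at h3 ⊢
    exact h3
  -- composed map
  let F := Φ ∘ g
  have hFC : ContDiff ℝ 1 F := hΦC.comp hg
  set R' := max R (‖y‖ + 1) with hR'
  have hFG : ∀ x, x ∉ Metric.closedBall 0 R' → F x = Φ x := by
    intro x hx
    simp only [F, Function.comp]
    rw [hgid x]
    intro h
    exact hx (Metric.closedBall_subset_closedBall (le_max_left _ _) h)
  have hcs : HasCompactSupport (fun x => g x - x) := by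
    apply HasCompactSupport.intro (isCompact_closedBall 0 R)
    intro x hx
    rw [hgid x hx, sub_self]
  obtain ⟨C, hC⟩ := ContDiff.lipschitzWith_of_hasCompactSupport hcs (hg.sub contDiff_id)
    (by norm_num)
  have hgL : LipschitzWith (C + 1) g := by
    have := hC.add LipschitzWith.id
    have e : g = fun x => (g x - x) + id x := by
      funext x; simp
    rw [e]; exact this
  have hFL : LipschitzWith (P * (C + 1)) F := hΦL.comp hgL
  have hΦL' : LipschitzWith (P * (C + 1)) Φ := hΦL.weaken (by
    apply le_mul_of_one_le_right zero_le; exact le_add_self)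
  have hNL := null_lagrangian F Φ hFC hΦC _ hFL hΦL' R' hFG
  have hle : ∫ x in Metric.closedBall 0 R', (fderiv ℝ F x).det ≤ 0 := by
    apply integral_nonpos
    intro x
    have : fderiv ℝ F x = (fderiv ℝ Φ (g x)).comp (fderiv ℝ g x) :=
      fderiv_comp x (hΦC.differentiable (by norm_num) _) (hg.differentiable (by norm_num) _)
    simp only [Pi.zero_apply]
    rw [this, ContinuousLinearMap.det, ContinuousLinearMap.toLinearMap_comp, LinearMap.det_comp]
    change (fderiv ℝ Φ (g x)).det * (fderiv ℝ g x).det ≤ 0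
    rw [hΦdet]
    by_cases h : ∀ i, |g x i - y i| < ρ
    · exact mul_nonpos_of_nonneg_of_nonpos (Finset.prod_nonneg fun i _ => hb0 _ _) (hneg x h)
    · push Not at h
      obtain ⟨i, hi⟩ := h
      rw [Finset.prod_eq_zero (Finset.mem_univ i), zero_mul]
      exact max_eq_left (by linarith)
  have hpos : 0 < ∫ x in Metric.closedBall 0 R', (fderiv ℝ Φ x).det := by
    have hcont : Continuous fun x => (fderiv ℝ Φ x).det :=
      ContinuousLinearMap.continuous_det.comp (hΦC.continuous_fderiv (by norm_num))
    rw [setIntegral_pos_iff_support_of_nonneg_ae]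
    · apply lt_of_lt_of_le (b := volume ((Function.support fun x => (fderiv ℝ Φ x).det) ∩
        Metric.ball 0 R')) _ (measure_mono (inter_subset_inter_right _ Metric.ball_subset_closedBall))
      apply IsOpen.measure_pos
      · exact (hcont.isOpen_support).inter Metric.isOpen_ball
      · refine ⟨y, ?_, ?_⟩
        · rw [Function.mem_support, hΦdet]
          apply (Finset.prod_pos fun i _ => ?_).ne'
          simp [b, hρ]
        · rw [mem_ball_zero_iff]
          exact lt_of_lt_of_le (lt_add_one _) (le_max_right _ _)
    · exact Eventually.of_forall fun x => by
        simp only [Pi.zero_apply]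
        rw [hΦdet]; exact Finset.prod_nonneg fun i _ => hb0 _ _
    · exact hcont.continuousOn.integrableOn_compact (isCompact_closedBall _ _)
  linarith

lemma norm_lt_of_coord {n : ℕ} (v : EuclideanSpace ℝ (Fin n)) (η : ℝ) (hη : 0 < η)
    (h : ∀ i, |v i| < η / (n + 1)) : ‖v‖ < η := by
  rw [EuclideanSpace.norm_eq, Real.sqrt_lt' hη]
  calc ∑ i, ‖v i‖ ^ 2 ≤ ∑ i : Fin n, (η / (n+1)) ^ 2 := by
        refine Finset.sum_le_sum fun i _ => ?_
        exact pow_le_pow_left₀ (norm_nonneg _) (h i).le 2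
    _ = n * (η / (n+1)) ^ 2 := by simp
    _ < η ^ 2 := by
        rw [div_pow, ← mul_div_assoc, div_lt_iff₀ (by positivity)]
        have : (0:ℝ) ≤ n := by positivity
        have : 0 < η ^ 2 := by positivity
        nlinarith [mul_nonneg this.le (by assumption : (0:ℝ) ≤ n), 
          mul_nonneg this.le (mul_nonneg (by assumption : (0:ℝ) ≤ n) (by assumption : (0:ℝ) ≤ n))]

lemma degree_semismooth {n : ℕ} (h : EuclideanSpace ℝ (Fin n) → EuclideanSpace ℝ (Fin n))
    (hc : Continuous h) (R : ℝ) (hid : ∀ x, x ∉ Metric.closedBall 0 R → h x = x)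
    (y : EuclideanSpace ℝ (Fin n)) (O : Set (EuclideanSpace ℝ (Fin n))) (hO : IsOpen O)
    (hZ : ∀ x, h x = y → x ∈ O) (hsm : ContDiffOn ℝ 1 h O)
    (hneg : ∀ x ∈ O, (fderiv ℝ h x).det ≤ 0) : False := by
  have hZc : IsCompact (h ⁻¹' {y}) := by
    apply (isCompact_closedBall (0 : EuclideanSpace ℝ (Fin n)) (max R ‖y‖)).of_isClosed_subset
      (isClosed_singleton.preimage hc)
    intro x hx
    by_cases hxR : x ∈ Metric.closedBall (0 : EuclideanSpace ℝ (Fin n)) R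
    · exact Metric.closedBall_subset_closedBall (le_max_left _ _) hxR
    · have := hid x hxR
      rw [mem_preimage, mem_singleton_iff, this] at hx
      rw [hx, mem_closedBall_zero_iff]
      exact le_max_right _ _
  obtain ⟨L, hLc, hZL, hLO⟩ := exists_compact_between hZc hO (fun x hx => hZ x hx)
  -- lower bound off L
  obtain ⟨η, hη, hlow⟩ : ∃ η > 0, ∀ x, x ∉ interior L → η ≤ ‖h x - y‖ := by
    let T := Metric.closedBall (0 : EuclideanSpace ℝ (Fin n)) (max R (‖y‖ + 1)) \ interior L
    have hT : IsCompact T := (isCompact_closedBall _ _).diff isOpen_interior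
    have hout : ∀ x, x ∉ Metric.closedBall (0 : EuclideanSpace ℝ (Fin n)) (max R (‖y‖ + 1)) →
        1 ≤ ‖h x - y‖ := by
      intro x hx
      rw [mem_closedBall_zero_iff, not_le, max_lt_iff] at hx
      rw [hid x (by rw [mem_closedBall_zero_iff, not_le]; exact hx.1)]
      linarith [norm_sub_norm_le x y]
    rcases T.eq_empty_or_nonempty with hTe | hTn
    · refine ⟨1, one_pos, fun x hx => hout x fun hx' => ?_⟩
      have : x ∈ T := ⟨hx', hx⟩
      rw [hTe] at this
      exact this
    · obtain ⟨x₀, hx₀, hmin⟩ := hT.exists_isMinOn hTn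
        ((hc.sub continuous_const).norm.continuousOn (f := fun x => ‖h x - y‖))
      refine ⟨min 1 ‖h x₀ - y‖, lt_min one_pos ?_, fun x hx => ?_⟩
      · rw [norm_pos_iff, sub_ne_zero]
        intro he
        exact hx₀.2 (hZL he)
      · by_cases hx' : x ∈ Metric.closedBall (0 : EuclideanSpace ℝ (Fin n)) (max R (‖y‖ + 1))
        · exact (min_le_right _ _).trans (hmin ⟨hx', hx⟩)
        · exact (min_le_left _ _).trans (hout x hx')
  obtain ⟨ψ, hψC, hψd, hψe, hψs⟩ := Continuous.exists_contDiff_approx_and_eqOn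
    (f := fun x => h x - x) (ε := fun _ => η / 2) 1 (hc.sub continuous_id) continuous_const
    (fun _ => by positivity) hLc.isClosed (hO.mem_nhdsSet.2 hLO) (hsm.sub contDiffOn_id)
  have hgh : ∀ x ∈ L, x + ψ x = h x := fun x hx => by rw [hψe hx]; simp
  refine degree_smooth (fun x => x + ψ x) (contDiff_id.add hψC) R ?_ y (η / 2 / (n + 1))
    (by positivity) ?_
  · intro x hx
    have : ψ x = 0 := by
      by_contra hne
      exact hψs hne (by simp [hid x hx])
    simp [this]
  · intro x hx
    have h1 : ‖x + ψ x - y‖ < η / 2 := norm_lt_of_coord _ _ (by positivity) hx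
    have h2 : ‖h x - y‖ < η := by
      have h3 := hψd x
      rw [dist_eq_norm, norm_sub_rev] at h3
      have : h x - y = (h x - x - ψ x) + (x + ψ x - y) := by abel
      rw [this]
      linarith [norm_add_le (h x - x - ψ x) (x + ψ x - y)]
    have hxL : x ∈ interior L := by
      by_contra hx'
      linarith [hlow x hx']
    have : (fun x => x + ψ x) =ᶠ[𝓝 x] h := by
      filter_upwards [mem_interior_iff_mem_nhds.1 hxL] with z hz using hgh z hz
    rw [this.fderiv_eq]
    exact hneg x (hLO (interior_subset hxL))

lemma lower_bound_of_det {n : ℕ} (A : EuclideanSpace ℝ (Fin n) →L[ℝ] EuclideanSpace ℝ (Fin n))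
    (hA : A.det ≠ 0) : ∃ κ > 0, ∀ v, κ * ‖v‖ ≤ ‖A v‖ := by
  let e := A.toContinuousLinearEquivOfDetNeZero hA
  have hAe : ∀ v, e v = A v := fun v => rfl
  refine ⟨(‖(e.symm : EuclideanSpace ℝ (Fin n) →L[ℝ] EuclideanSpace ℝ (Fin n))‖ + 1)⁻¹,
    by positivity, fun v => ?_⟩
  rw [inv_mul_le_iff₀ (by positivity)]
  have h1 := (e.symm : EuclideanSpace ℝ (Fin n) →L[ℝ] EuclideanSpace ℝ (Fin n)).le_opNorm (A v)
  rw [← hAe, ContinuousLinearEquiv.coe_coe, e.symm_apply_apply] at h1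
  rw [← hAe]
  linarith [norm_nonneg (e v)]

lemma degree_differentiable {n : ℕ} (h : EuclideanSpace ℝ (Fin n) → EuclideanSpace ℝ (Fin n))
    (hc : Continuous h) (R : ℝ) (hid : ∀ x, x ∉ Metric.closedBall 0 R → h x = x)
    (y : EuclideanSpace ℝ (Fin n))
    (hder : ∀ x, h x = y → ∃ A : EuclideanSpace ℝ (Fin n) →L[ℝ] EuclideanSpace ℝ (Fin n),
      HasFDerivAt h A x ∧ A.det < 0) : False := by
  have hZb : ∀ x, h x = y → ‖x‖ ≤ max R ‖y‖ := by
    intro x hx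
    by_cases hxR : x ∈ Metric.closedBall (0 : EuclideanSpace ℝ (Fin n)) R
    · exact (mem_closedBall_zero_iff.1 hxR).trans (le_max_left _ _)
    · rw [hid x hxR] at hx
      rw [hx]
      exact le_max_right _ _
  have hZc : IsCompact (h ⁻¹' {y}) := by
    apply (isCompact_closedBall (0 : EuclideanSpace ℝ (Fin n)) (max R ‖y‖)).of_isClosed_subset
      (isClosed_singleton.preimage hc)
    intro x hx
    exact mem_closedBall_zero_iff.2 (hZb x hx)
  choose! A hA hAneg using hder
  have hκ : ∀ x, h x = y → ∃ κ > 0, ∀ v, κ * ‖v‖ ≤ ‖A x v‖ := fun x hx =>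
    lower_bound_of_det _ (hAneg x hx).ne
  choose! κ hκ0 hκ using hκ
  have hε : ∀ x, h x = y → ∃ ε > 0, ∀ z, dist z x < ε →
      ‖h z - y - A x (z - x)‖ ≤ κ x / 2 * ‖z - x‖ := by
    intro x hx
    have h1 := (hA x hx).isLittleO.def (c := κ x / 2) (by have := hκ0 x hx; positivity)
    rw [hx] at h1
    exact Metric.eventually_nhds_iff.1 h1
  choose! ε hε0 hε using hε
  have hZf : (h ⁻¹' {y}).Finite := by
    by_contra hinf
    obtain ⟨z, hz, hacc⟩ := Set.Infinite.exists_accPt_of_subset_isCompact hinf hZc subset_rfl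
    rw [accPt_iff_frequently] at hacc
    obtain ⟨x, ⟨hxz, hx⟩, hxε⟩ := (hacc.and_eventually (Metric.ball_mem_nhds z (hε0 z hz))).exists
    have h1 := hε z hz x hxε
    have hx' : h x = y := hx
    rw [hx', sub_self, zero_sub, norm_neg] at h1
    have h2 := hκ z hz (x - z)
    have h3 : 0 < ‖x - z‖ := norm_pos_iff.2 (sub_ne_zero.2 hxz)
    nlinarith [hκ0 z hz]
  have small : ∀ k c : ℝ, 0 < c → ∀ᶠ r in 𝓝[>] (0:ℝ), k * r < c := by
    intro k c hc'
    have : Tendsto (fun r : ℝ => k * r) (𝓝[>] 0) (𝓝 (k * 0)) :=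
      ((continuous_const.mul continuous_id).tendsto 0).mono_left nhdsWithin_le_nhds
    rw [mul_zero] at this
    exact this.eventually (gt_mem_nhds hc')
  have hr : ∀ᶠ r in 𝓝[>] (0:ℝ), ∀ z ∈ h ⁻¹' {y}, 3 * r < ε z ∧
      ∀ w ∈ h ⁻¹' {y}, w ≠ z → 4 * r < dist w z := by
    rw [Filter.eventually_all_finite hZf]
    intro z hz
    refine (small _ _ (hε0 z hz)).and ?_
    rw [Filter.eventually_all_finite hZf]
    intro w _
    by_cases hwz : w = z
    · simp [hwz]
    · filter_upwards [small 4 _ (dist_pos.2 hwz)] with r hr _ using hr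
  obtain ⟨r, hr, hr0⟩ := (hr.and self_mem_nhdsWithin).exists
  have hr0 : 0 < r := hr0
  let χ : EuclideanSpace ℝ (Fin n) → EuclideanSpace ℝ (Fin n) → ℝ :=
    fun z x => max 0 (min 1 (2 - dist x z / r))
  have hχc : ∀ z, Continuous (χ z) := fun z => by fun_prop
  have hχ0 : ∀ z x, 0 ≤ χ z x := fun z x => le_max_left _ _
  have hχ1 : ∀ z x, χ z x ≤ 1 := fun z x => max_le zero_le_one (min_le_left _ _)
  have hχout : ∀ z x, 2 * r ≤ dist x z → χ z x = 0 := by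
    intro z x hx
    apply max_eq_left
    apply (min_le_right _ _).trans
    rw [sub_nonpos, le_div_iff₀ hr0]
    exact hx
  have hχin : ∀ z x, dist x z ≤ r → χ z x = 1 := by
    intro z x hx
    have : 1 ≤ 2 - dist x z / r := by
      have : dist x z / r ≤ 1 := by rw [div_le_one hr0]; exact hx
      linarith
    simp only [χ]
    rw [min_eq_left this]
    simp
  let h1 : EuclideanSpace ℝ (Fin n) → EuclideanSpace ℝ (Fin n) :=
    fun x => h x + ∑ z ∈ hZf.toFinset, χ z x • (y + A z (x - z) - h x)
  have hh1c : Continuous h1 := by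
    apply hc.add
    apply continuous_finsetSum
    intro z _
    exact (hχc z).smul ((continuous_const.add ((A z).continuous.comp
      (continuous_id.sub continuous_const))).sub hc)
  have hnear : ∀ z, h z = y → ∀ x, dist x z < 2 * r →
      h1 x = h x + χ z x • (y + A z (x - z) - h x) := by
    intro z hz x hx
    simp only [h1]
    rw [Finset.sum_eq_single z]
    · intro w hw hwz
      have hw' : h w = y := by simpa using hw
      rw [hχout w x, zero_smul]
      have := (hr z hz).2 w hw' hwz
      have := dist_triangle w x z
      rw [dist_comm w x] at this
      linarith
    · intro hz'
      simp [hz] at hz'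
  have hfar : ∀ x, (∀ z, h z = y → 2 * r ≤ dist x z) → h1 x = h x := by
    intro x hx
    simp only [h1]
    rw [Finset.sum_eq_zero, add_zero]
    intro z hz
    rw [hχout z x (hx z (by simpa using hz)), zero_smul]
  have hloc : ∀ z, h z = y → ∀ x, dist x z < r → h1 x = y + A z (x - z) := by
    intro z hz x hx
    rw [hnear z hz x (by linarith), hχin z x hx.le, one_smul]
    abel
  have hlocd : ∀ z, h z = y → ∀ x, dist x z < r → HasFDerivAt h1 (A z) x := by
    intro z hz x hx
    have h2 : HasFDerivAt (fun x => y + A z (x - z)) (A z) x := by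
      have := ((A z).hasFDerivAt.comp x ((hasFDerivAt_id x).sub_const z)).const_add y
      simpa using this
    apply h2.congr_of_eventuallyEq
    filter_upwards [Metric.isOpen_ball.mem_nhds hx] with w hw using hloc z hz w hw
  refine degree_semismooth h1 hh1c (max R ‖y‖ + 2 * r) ?_ y
    (⋃ z ∈ h ⁻¹' {y}, Metric.ball z r) (isOpen_biUnion fun _ _ => Metric.isOpen_ball) ?_ ?_ ?_
  · intro x hx
    rw [mem_closedBall_zero_iff, not_le] at hx
    rw [hfar, hid x]
    · rw [mem_closedBall_zero_iff, not_le]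
      linarith [le_max_left R ‖y‖]
    · intro z hz
      have := hZb z hz
      rw [dist_eq_norm]
      linarith [norm_sub_norm_le x z]
  · intro x hx
    by_cases hcase : ∃ z, h z = y ∧ dist x z < 2 * r
    · obtain ⟨z, hz, hxz⟩ := hcase
      rw [hnear z hz x hxz] at hx
      have e1 := hε z hz x (by have := (hr z hz).1; linarith)
      have e2 := hκ z hz (x - z)
      have e3 : A z (x - z) = -((1 - χ z x) • (h x - y - A z (x - z))) := by
        have : A z (x - z) + (1 - χ z x) • (h x - y - A z (x - z))
            = h x + χ z x • (y + A z (x - z) - h x) - y := by module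
        rw [hx, sub_self] at this
        exact eq_neg_of_add_eq_zero_left this
      have e4 : ‖A z (x - z)‖ ≤ κ z / 2 * ‖x - z‖ := by
        rw [e3, norm_neg, norm_smul]
        calc _ ≤ 1 * ‖h x - y - A z (x - z)‖ := by
              gcongr
              rw [Real.norm_of_nonneg (by linarith [hχ1 z x])]
              linarith [hχ0 z x]
          _ ≤ _ := by rw [one_mul]; exact e1
      have hxz' : x = z := by
        by_contra hne
        have h3 : 0 < ‖x - z‖ := norm_pos_iff.2 (sub_ne_zero.2 hne)
        nlinarith [hκ0 z hz]
      rw [hxz']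
      exact mem_biUnion (show z ∈ h ⁻¹' {y} from hz) (Metric.mem_ball_self hr0)
    · push Not at hcase
      rw [hfar x hcase] at hx
      exact mem_biUnion (show x ∈ h ⁻¹' {y} from hx) (Metric.mem_ball_self hr0)
  · intro x hx
    obtain ⟨z, hz, hxz⟩ := mem_iUnion₂.1 hx
    apply ContDiffAt.contDiffWithinAt
    have h2 : ContDiffAt ℝ 1 (fun x => y + A z (x - z)) x :=
      (contDiff_const.add ((A z).contDiff.comp (contDiff_id.sub contDiff_const))).contDiffAt
    apply h2.congr_of_eventuallyEq
    filter_upwards [Metric.isOpen_ball.mem_nhds hxz] with w hw using hloc z hz w hw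
  · intro x hx
    obtain ⟨z, hz, hxz⟩ := mem_iUnion₂.1 hx
    rw [(hlocd z hz x hxz).fderiv]
    exact (hAneg z hz).le

lemma local_contradiction {n : ℕ} (f : EuclideanSpace ℝ (Fin n) → EuclideanSpace ℝ (Fin n))
    (f' : EuclideanSpace ℝ (Fin n) → EuclideanSpace ℝ (Fin n) →L[ℝ] EuclideanSpace ℝ (Fin n))
    (a z : EuclideanSpace ℝ (Fin n)) (R : ℝ) (hR : 0 < R)
    (hf : ∀ x ∈ Metric.ball a R, HasFDerivAt f (f' x) x)
    (A : EuclideanSpace ℝ (Fin n) →L[ℝ] EuclideanSpace ℝ (Fin n)) (hA : A.det ≠ 0)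
    (κ : ℝ) (hκ0 : 0 < κ) (hκ : ∀ v, κ * ‖v‖ ≤ ‖A v‖)
    (happ : ∀ x ∈ Metric.ball a R, ‖f x - f a - A (x - a)‖ ≤ κ / 2 * ‖x - a‖)
    (hz : dist z a < R / 9)
    (hfib : ∀ x ∈ Metric.ball a R, f x = f z → A.det * (f' x).det < 0) : False := by
  let e := A.toContinuousLinearEquivOfDetNeZero hA
  let B : EuclideanSpace ℝ (Fin n) →L[ℝ] EuclideanSpace ℝ (Fin n) := e.symm
  have hAB : ∀ v, A (B v) = v := fun v => e.apply_symm_apply v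
  have hBA : ∀ v, B (A v) = v := fun v => e.symm_apply_apply v
  have hdet : A.det * B.det = 1 := by
    have h1 : A.comp B = ContinuousLinearMap.id ℝ _ := by ext1 v; exact hAB v
    have h2 : (A.comp B).det = A.det * B.det := by
      simp only [ContinuousLinearMap.det]
      rw [ContinuousLinearMap.toLinearMap_comp, LinearMap.det_comp]
    rw [← h2, h1]
    simp [ContinuousLinearMap.det]
  set ρ := R / 3 with hρ
  have hρ0 : 0 < ρ := by positivity
  let k : EuclideanSpace ℝ (Fin n) → EuclideanSpace ℝ (Fin n) := fun x => B (f (a + x) - f a)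
  have hmem : ∀ x : EuclideanSpace ℝ (Fin n), ‖x‖ < R → a + x ∈ Metric.ball a R := by
    intro x hx
    simpa [Metric.mem_ball, dist_eq_norm] using hx
  have hkd : ∀ x : EuclideanSpace ℝ (Fin n), ‖x‖ < R → HasFDerivAt k (B.comp (f' (a + x))) x := by
    intro x hx
    have h1 : HasFDerivAt (fun x => a + x) (ContinuousLinearMap.id ℝ _) x :=
      (hasFDerivAt_id x).const_add a
    have h2 := (hf _ (hmem x hx)).comp x h1
    have h3 := B.hasFDerivAt.comp x (h2.sub_const (f a))
    rw [ContinuousLinearMap.comp_id] at h3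
    exact h3
  have hk : ∀ x : EuclideanSpace ℝ (Fin n), ‖x‖ < R → ‖k x - x‖ ≤ ‖x‖ / 2 := by
    intro x hx
    have h1 := happ _ (hmem x hx)
    have h2 := hκ (k x - x)
    rw [map_sub] at h2
    simp only [k] at h2 ⊢
    rw [hAB] at h2
    rw [add_sub_cancel_left] at h1
    have h3 := h2.trans h1
    rw [show κ / 2 * ‖x‖ = κ * (‖x‖ / 2) by ring] at h3
    exact le_of_mul_le_mul_left h3 hκ0
  let χ : EuclideanSpace ℝ (Fin n) → ℝ := fun x => max 0 (min 1 (2 - ‖x‖ / ρ))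
  have hχc : Continuous χ := by fun_prop
  have hχ0 : ∀ x, 0 ≤ χ x := fun x => le_max_left _ _
  have hχ1 : ∀ x, χ x ≤ 1 := fun x => max_le zero_le_one (min_le_left _ _)
  have hχout : ∀ x, 2 * ρ ≤ ‖x‖ → χ x = 0 := by
    intro x hx
    apply max_eq_left
    apply (min_le_right _ _).trans
    rw [sub_nonpos, le_div_iff₀ hρ0]
    exact hx
  have hχin : ∀ x, ‖x‖ ≤ ρ → χ x = 1 := by
    intro x hx
    have : 1 ≤ 2 - ‖x‖ / ρ := by
      have : ‖x‖ / ρ ≤ 1 := by rw [div_le_one hρ0]; exact hx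
      linarith
    simp only [χ]
    rw [min_eq_left this]
    simp
  let h : EuclideanSpace ℝ (Fin n) → EuclideanSpace ℝ (Fin n) := fun x => x + χ x • (k x - x)
  have hid : ∀ x, 2 * ρ ≤ ‖x‖ → h x = x := by
    intro x hx
    simp only [h]
    rw [hχout x hx, zero_smul, add_zero]
  have hhx : ∀ x, ‖h x - x‖ ≤ ‖x‖ / 2 := by
    intro x
    by_cases hx : ‖x‖ < R
    · simp only [h]
      rw [add_sub_cancel_left, norm_smul, Real.norm_of_nonneg (hχ0 x)]
      have := hk x hx
      calc _ ≤ 1 * (‖x‖ / 2) := by gcongr; exact hχ1 x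
        _ = _ := one_mul _
    · rw [hid x (by linarith), sub_self, norm_zero]
      positivity
  have hhc : Continuous h := by
    rw [continuous_iff_continuousAt]
    intro x
    by_cases hx : ‖x‖ < R
    · exact continuousAt_id.add (hχc.continuousAt.smul
        ((hkd x hx).continuousAt.sub continuousAt_id))
    · have : h =ᶠ[𝓝 x] id := by
        have : ∀ᶠ w in 𝓝 x, 2 * ρ < ‖w‖ :=
          continuous_norm.continuousAt.eventually (lt_mem_nhds (by linarith))
        filter_upwards [this] with w hw using hid w hw.le
      exact continuousAt_id.congr this.symm
  have hzR : ‖z - a‖ < R / 9 := by rwa [← dist_eq_norm]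
  have hy : ‖k (z - a)‖ ≤ 3 / 2 * ‖z - a‖ := by
    have := hk (z - a) (by linarith)
    linarith [norm_sub_norm_le (k (z - a)) (z - a)]
  refine degree_differentiable h hhc (2 * ρ) ?_ (k (z - a)) ?_
  · intro x hx
    rw [mem_closedBall_zero_iff, not_le] at hx
    exact hid x hx.le
  · intro x hx
    have h1 := hhx x
    have h2 := norm_sub_norm_le x (h x)
    rw [norm_sub_rev, hx] at h2
    rw [hx] at h1
    have hxρ : ‖x‖ < ρ := by linarith
    have hxR : ‖x‖ < R := by linarith
    have hev : h =ᶠ[𝓝 x] k := by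
      have : ∀ᶠ w in 𝓝 x, ‖w‖ < ρ := continuous_norm.continuousAt.eventually (gt_mem_nhds hxρ)
      filter_upwards [this] with w hw
      simp only [h]
      rw [hχin w hw.le, one_smul]
      abel
    refine ⟨_, (hkd x hxR).congr_of_eventuallyEq hev, ?_⟩
    have hfz : f (a + x) = f z := by
      have h3 : k x = k (z - a) := by rw [← hev.self_of_nhds, hx]
      simp only [k] at h3
      have h4 := congrArg A h3
      rw [hAB, hAB, add_sub_cancel] at h4
      exact sub_left_injective h4
    have h5 := hfib _ (hmem x hxR) hfz
    have h6 : (B.comp (f' (a + x))).det = B.det * (f' (a + x)).det := by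
      simp only [ContinuousLinearMap.det]
      rw [ContinuousLinearMap.toLinearMap_comp, LinearMap.det_comp]
    rw [h6]
    have hB : B.det ≠ 0 := fun h0 => by rw [h0, mul_zero] at hdet; exact zero_ne_one hdet
    have : B.det * (f' (a + x)).det = B.det ^ 2 * (A.det * (f' (a + x)).det) := by
      linear_combination (- B.det * (f' (a + x)).det) * hdet
    rw [this]
    exact mul_neg_of_pos_of_neg (by positivity) h5

lemma sign_const {n : ℕ} {U : Set (EuclideanSpace ℝ (Fin n))} (hU : IsOpen U)
    (hUc : IsPreconnected U) (f : EuclideanSpace ℝ (Fin n) → EuclideanSpace ℝ (Fin n))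
    (f' : EuclideanSpace ℝ (Fin n) → EuclideanSpace ℝ (Fin n) →L[ℝ] EuclideanSpace ℝ (Fin n))
    (hf : ∀ x ∈ U, HasFDerivAt f (f' x) x) (hne : ∀ x ∈ U, (f' x).det ≠ 0)
    (x₀ x₁ : EuclideanSpace ℝ (Fin n)) (hx₀ : x₀ ∈ U) (hx₁ : x₁ ∈ U)
    (h₀ : (f' x₀).det < 0) (h₁ : 0 < (f' x₁).det) : False := by
  let P : Set (EuclideanSpace ℝ (Fin n)) := {x | x ∈ U ∧ 0 < (f' x).det}
  let N : Set (EuclideanSpace ℝ (Fin n)) := {x | x ∈ U ∧ (f' x).det < 0}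
  have hcross : ∀ V ⊆ U, IsPreconnected V → (V ∩ P).Nonempty → (V ∩ N).Nonempty →
      (V ∩ (closure P ∩ closure N)).Nonempty := by
    intro V hVU hV hVP hVN
    refine isPreconnected_closed_iff.1 hV _ _ isClosed_closure isClosed_closure ?_
      (hVP.mono (inter_subset_inter_right _ subset_closure))
      (hVN.mono (inter_subset_inter_right _ subset_closure))
    intro x hx
    rcases lt_or_gt_of_ne (hne x (hVU hx)) with h | h
    · exact Or.inr (subset_closure ⟨hVU hx, h⟩)
    · exact Or.inl (subset_closure ⟨hVU hx, h⟩)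
  let F := U ∩ (closure P ∩ closure N)
  have hFn : F.Nonempty := hcross U subset_rfl hUc ⟨x₁, hx₁, hx₁, h₁⟩ ⟨x₀, hx₀, hx₀, h₀⟩
  have hFU : F ⊆ U := inter_subset_left
  have hFlc : IsLocallyClosed F :=
    hU.isLocallyClosed.inter (isClosed_closure.inter isClosed_closure).isLocallyClosed
  have hκ : ∀ x, x ∈ U → ∃ κ > 0, ∀ v, κ * ‖v‖ ≤ ‖f' x v‖ := fun x hx =>
    lower_bound_of_det _ (hne x hx)
  choose! κ hκ0 hκ using hκ
  obtain ⟨T, hTU, hTc, hTcov⟩ := TopologicalSpace.isOpen_biUnion_countable U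
    (fun x => Metric.ball (f' x) (κ x / 4)) (fun _ _ => Metric.isOpen_ball)
  have : Countable T := hTc.to_subtype
  have : Nonempty F := hFn.to_subtype
  have : LocallyCompactSpace F := hFlc.locallyCompactSpace
  have hfc : Continuous fun x : F => f x := by
    rw [continuous_iff_continuousAt]
    intro x
    exact (hf x (hFU x.2)).continuousAt.comp continuous_subtype_val.continuousAt
  let C : T × ℕ → Set F := fun p => {x : F | ∀ y ∈ U, dist y x < 1 / ((p.2 : ℝ) + 1) →
    ‖f y - f x - f' p.1 (y - x)‖ ≤ κ p.1 / 2 * ‖y - x‖}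
  have hCc : ∀ p, IsClosed (C p) := by
    intro p
    have : C p = ⋂ y ∈ U, ({x : F | 1 / ((p.2 : ℝ) + 1) ≤ dist y x} ∪
        {x : F | ‖f y - f x - f' p.1 (y - x)‖ ≤ κ p.1 / 2 * ‖y - x‖}) := by
      ext x
      simp only [C, mem_ofPred_eq, mem_iInter, mem_union]
      refine forall₂_congr fun y _ => ?_
      rw [imp_iff_not_or, not_lt]
    rw [this]
    refine isClosed_biInter fun y _ => IsClosed.union ?_ ?_
    · exact isClosed_le continuous_const (continuous_const.dist continuous_subtype_val)
    · have hd : Continuous fun x : F => y - (x : EuclideanSpace ℝ (Fin n)) :=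
        continuous_const.sub continuous_subtype_val
      exact isClosed_le ((continuous_const.sub hfc).sub
        ((f' p.1).continuous.comp hd)).norm (continuous_const.mul hd.norm)
  have hCu : ⋃ p, C p = univ := by
    rw [eq_univ_iff_forall]
    intro x
    have hxU := hFU x.2
    have h1 : f' x ∈ ⋃ i ∈ T, Metric.ball (f' i) (κ i / 4) := by
      rw [hTcov]
      exact mem_biUnion hxU (Metric.mem_ball_self (by have := hκ0 x hxU; positivity))
    obtain ⟨t, htT, ht⟩ := mem_iUnion₂.1 h1
    have hκt := hκ0 t (hTU htT)
    have h2 := (hf x hxU).isLittleO.def (c := κ t / 4) (by positivity)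
    obtain ⟨ε, hε, h3⟩ := Metric.eventually_nhds_iff.1 h2
    obtain ⟨k, hk⟩ := exists_nat_one_div_lt hε
    refine mem_iUnion.2 ⟨(⟨t, htT⟩, k), fun y hy hyx => ?_⟩
    have h4 := h3 (hyx.trans hk)
    have h5 : ‖(f' x - f' t) (y - x)‖ ≤ κ t / 4 * ‖y - x‖ := by
      apply (ContinuousLinearMap.le_opNorm _ _).trans
      gcongr
      rw [← dist_eq_norm]
      exact (Metric.mem_ball.1 ht).le
    have h6 : f y - f x - f' t (y - x)
        = (f y - f x - f' x (y - x)) + (f' x - f' t) (y - x) := by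
      simp
    simp only
    rw [h6]
    linarith [norm_add_le (f y - f x - f' x (y - x)) ((f' x - f' t) (y - x))]
  obtain ⟨⟨⟨t, htT⟩, k⟩, hint⟩ := nonempty_interior_of_iUnion_of_closed hCc hCu
  obtain ⟨⟨a, haF⟩, ha⟩ := hint
  have htU := hTU htT
  have hκt := hκ0 t htU
  obtain ⟨R₁, hR₁, hb₁⟩ := Metric.mem_nhds_iff.1 (mem_interior_iff_mem_nhds.1 ha)
  obtain ⟨R₂, hR₂, hb₂⟩ := Metric.mem_nhds_iff.1 (hU.mem_nhds (hFU haF))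
  obtain ⟨R, hR, hRR₁, hRR₂, hRk⟩ : ∃ R > 0, R ≤ R₁ ∧ R ≤ R₂ ∧ 2 * R ≤ 1 / ((k:ℝ) + 1) := by
    refine ⟨min R₁ (min R₂ (1 / ((k:ℝ) + 1) / 2)), by positivity, min_le_left _ _,
      (min_le_right _ _).trans (min_le_left _ _), ?_⟩
    have := (min_le_right R₁ (min R₂ (1 / ((k:ℝ) + 1) / 2))).trans (min_le_right _ _)
    linarith
  have hbU : Metric.ball a R ⊆ U := (Metric.ball_subset_ball hRR₂).trans hb₂
  have happ : ∀ x ∈ F, x ∈ Metric.ball a R → ∀ y ∈ Metric.ball a R,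
      ‖f y - f x - f' t (y - x)‖ ≤ κ t / 2 * ‖y - x‖ := by
    intro x hxF hxa y hya
    have h1 : (⟨x, hxF⟩ : F) ∈ C (⟨t, htT⟩, k) := hb₁ (lt_of_lt_of_le hxa hRR₁)
    refine h1 y (hbU hya) ?_
    have h2 := dist_triangle_right y x a
    have h3 := Metric.mem_ball.1 hxa
    have h4 := Metric.mem_ball.1 hya
    simp only
    linarith
  -- pick z of the opposite sign
  obtain ⟨z, hzU, hza, hzs⟩ : ∃ z ∈ U, dist z a < R / 9 ∧ (f' t).det * (f' z).det < 0 := by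
    rcases lt_or_gt_of_ne (hne t htU) with h | h
    · obtain ⟨z, hz, hd⟩ := Metric.mem_closure_iff.1 haF.2.1 (R / 9) (by positivity)
      exact ⟨z, hz.1, by rwa [dist_comm], mul_neg_of_neg_of_pos h hz.2⟩
    · obtain ⟨z, hz, hd⟩ := Metric.mem_closure_iff.1 haF.2.2 (R / 9) (by positivity)
      exact ⟨z, hz.1, by rwa [dist_comm], mul_neg_of_pos_of_neg h hz.2⟩
  have hzR : z ∈ Metric.ball a R := by rw [Metric.mem_ball]; linarith
  refine local_contradiction f f' a z R hR (fun x hx => hf x (hbU hx)) (f' t) (hne t htU)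
    (κ t) hκt (hκ t htU) (happ a haF (Metric.mem_ball_self hR)) hza ?_
  intro x hx hxz
  by_contra hcon
  have hxU := hbU hx
  have hzx : (f' z).det * (f' x).det < 0 := by
    have h1 := hne t htU
    have h2 := hne x hxU
    have h3 : 0 < (f' t).det * (f' x).det :=
      lt_of_le_of_ne (not_lt.1 hcon) (mul_ne_zero h1 h2).symm
    have h4 := mul_neg_of_neg_of_pos hzs h3
    have h5 : 0 < (f' t).det ^ 2 := by positivity
    by_contra h6
    nlinarith [mul_nonneg h5.le (not_lt.1 h6)]
  have hseg : segment ℝ z x ⊆ Metric.ball a R := (convex_ball a R).segment_subset hzR hx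
  have hPN : (segment ℝ z x ∩ P).Nonempty ∧ (segment ℝ z x ∩ N).Nonempty := by
    rcases mul_neg_iff.1 hzx with ⟨h1, h2⟩ | ⟨h1, h2⟩
    · exact ⟨⟨z, left_mem_segment ℝ z x, hzU, h1⟩, ⟨x, right_mem_segment ℝ z x, hxU, h2⟩⟩
    · exact ⟨⟨x, right_mem_segment ℝ z x, hxU, h2⟩, ⟨z, left_mem_segment ℝ z x, hzU, h1⟩⟩
  obtain ⟨w, hws, hwPN⟩ := hcross _ (hseg.trans hbU) (convex_segment z x).isPreconnected
    hPN.1 hPN.2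
  have hwb := hseg hws
  have hwF : w ∈ F := ⟨hbU hwb, hwPN⟩
  have e1 := happ w hwF hwb z hzR
  have e2 := happ w hwF hwb x hx
  rw [hxz] at e2
  have e3 := hκ t htU (z - x)
  have e4 : f' t (z - x) = (f z - f w - f' t (x - w)) - (f z - f w - f' t (z - w)) := by
    simp only [map_sub]; abel
  have e5 : ‖z - w‖ + ‖x - w‖ = ‖z - x‖ := by
    have := dist_add_dist_of_mem_segment hws
    rw [dist_eq_norm, dist_eq_norm, dist_eq_norm, norm_sub_rev w x] at this
    exact this
  have e6 := norm_sub_le (f z - f w - f' t (x - w)) (f z - f w - f' t (z - w))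
  rw [← e4] at e6
  have e7 : κ t * ‖z - x‖ ≤ κ t / 2 * ‖z - x‖ := by
    rw [← e5]
    rw [← e5] at e3
    linarith
  have e8 : z = x := by
    by_contra hzx'
    have : 0 < ‖z - x‖ := norm_pos_iff.2 (sub_ne_zero.2 hzx')
    nlinarith
  rw [e8] at hzx
  nlinarith [mul_self_nonneg (f' x).det]



/-- If the characteristic-type polynomials at `x₀, x₁` factor as
`q₀(λ)·(α−λ)^{n₀}` with `n₀` odd and `q₁(λ)·(α−λ)^{n₁}` with `n₁` even, and
`q₀(α)·q₁(α) > 0`, then for all `λ` slightly to the right of `α` some `x₂ ∈ U`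
satisfies `det (f' x₂ − λ·id) = 0`. -/
theorem darboux_eigenvalue_right
    {n : ℕ} {U : Set (EuclideanSpace ℝ (Fin n))} (hU : IsOpen U) (hUconn : IsConnected U)
    (f : EuclideanSpace ℝ (Fin n) → EuclideanSpace ℝ (Fin n))
    (f' : EuclideanSpace ℝ (Fin n) → EuclideanSpace ℝ (Fin n) →L[ℝ] EuclideanSpace ℝ (Fin n))
    (hf : ∀ x ∈ U, HasFDerivAt f (f' x) x)
    (x₀ x₁ : EuclideanSpace ℝ (Fin n)) (hx₀ : x₀ ∈ U) (hx₁ : x₁ ∈ U)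
    (α : ℝ) (n₀ n₁ : ℕ) (hn₀ : Odd n₀) (hn₁ : Even n₁)
    (q₀ q₁ : Polynomial ℝ)
    (hq₀ : ∀ l : ℝ,
      (f' x₀ - l • ContinuousLinearMap.id ℝ (EuclideanSpace ℝ (Fin n))).det
        = q₀.eval l * (α - l) ^ n₀)
    (hq₁ : ∀ l : ℝ,
      (f' x₁ - l • ContinuousLinearMap.id ℝ (EuclideanSpace ℝ (Fin n))).det
        = q₁.eval l * (α - l) ^ n₁)
    (hα : q₀.eval α * q₁.eval α > 0) :
    ∃ δ > (0 : ℝ), ∀ l ∈ Set.Ioo α (α + δ),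
      ∃ x₂ ∈ U, (f' x₂ - l • ContinuousLinearMap.id ℝ (EuclideanSpace ℝ (Fin n))).det = 0 := by
  set I := ContinuousLinearMap.id ℝ (EuclideanSpace ℝ (Fin n)) with hI
  have hev : ∀ᶠ l in 𝓝 α, 0 < q₀.eval l * q₁.eval l :=
    (q₀.continuous.mul q₁.continuous).continuousAt.eventually (lt_mem_nhds hα)
  obtain ⟨δ, hδ, hball⟩ := Metric.eventually_nhds_iff.1 hev
  refine ⟨δ, hδ, fun l hl => ?_⟩
  have hl1 : α - l < 0 := by linarith [hl.1]
  have hq : 0 < q₀.eval l * q₁.eval l := by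
    apply hball
    rw [Real.dist_eq, abs_lt]
    constructor <;> linarith [hl.1, hl.2]
  have hp0 : (α - l) ^ n₀ < 0 := hn₀.pow_neg hl1
  have hp1 : 0 < (α - l) ^ n₁ := hn₁.pow_pos hl1.ne
  have hprod : (f' x₀ - l • I).det * (f' x₁ - l • I).det < 0 := by
    rw [hq₀, hq₁]
    have := mul_neg_of_pos_of_neg hq (mul_neg_of_neg_of_pos hp0 hp1)
    linarith
  by_contra hcon
  push Not at hcon
  have hd : ∀ x ∈ U, HasFDerivAt (fun x => f x - l • x) (f' x - l • I) x := fun x hx =>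
    (hf x hx).sub ((hasFDerivAt_id x).const_smul l)
  rcases mul_neg_iff.1 hprod with ⟨h1, h2⟩ | ⟨h1, h2⟩
  · exact sign_const hU hUconn.isPreconnected _ (fun x => f' x - l • I) hd hcon x₁ x₀ hx₁ hx₀ h2 h1
  · exact sign_const hU hUconn.isPreconnected _ (fun x => f' x - l • I) hd hcon x₀ x₁ hx₀ hx₁ h1 h2
end

section
/- Let U be an open connected subset of ℝⁿ and let f : U → ℝⁿ be differentiable, i.e. at every x ∈ U there is a continuous linear map f′(x) : ℝⁿ → ℝⁿ with HasFDerivAt f (f′(x)) x. Let x₀, x₁ ∈ U, α ∈ ℝ, and let n₀ be an odd natural number and n₁ an even natural number. Suppose there are real polynomials q₀ and q₁ such that for every λ ∈ ℝ: det(f′(x₀) − λ·id) = q₀(λ)·(α − λ)^{n₀} and det(f′(x₁) − λ·id) = q₁(λ)·(α − λ)^{n₁}, and suppose q₀(α)·q₁(α) < 0. Then there exists δ > 0 such that for every λ ∈ (α − δ, α) there exists x₂ ∈ U with det(f′(x₂) − λ·id) = 0. -/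
open Set Filter Topology MeasureTheory
open scoped Manifold ContDiff

abbrev Eu (n : ℕ) := EuclideanSpace ℝ (Fin n)

lemma eu_det_pos {n : ℕ} (A : Eu n →L[ℝ] Eu n) (h : ∀ v, v ≠ 0 → ‖A v‖ < ‖v‖) :
    0 < (ContinuousLinearMap.id ℝ (Eu n) + A).det := by
  by_contra hc
  push Not at hc
  have hcont : Continuous fun t : ℝ => (ContinuousLinearMap.id ℝ (Eu n) + t • A).det :=
    ContinuousLinearMap.continuous_det.comp (by fun_prop)
  have h0 : (ContinuousLinearMap.id ℝ (Eu n) + (0:ℝ) • A).det = 1 := by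
    simp [ContinuousLinearMap.det]
  have h1 : (ContinuousLinearMap.id ℝ (Eu n) + (1:ℝ) • A).det ≤ 0 := by simpa using hc
  obtain ⟨t, ht, ht0⟩ := intermediate_value_Icc' (zero_le_one (α := ℝ)) hcont.continuousOn
    (show (0:ℝ) ∈ Icc _ _ from ⟨h1, by rw [h0]; exact zero_le_one⟩)
  obtain ⟨v, hv, hv0⟩ := (Submodule.ne_bot_iff _).1
    (LinearMap.bot_lt_ker_of_det_eq_zero (f := ((ContinuousLinearMap.id ℝ (Eu n) + t • A :
      Eu n →L[ℝ] Eu n) : Eu n →ₗ[ℝ] Eu n)) ht0).ne'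
  have hv' : v + t • A v = 0 := by simpa using hv
  have : ‖v‖ = t * ‖A v‖ := by
    rw [eq_neg_of_add_eq_zero_left hv', norm_neg, norm_smul, Real.norm_of_nonneg ht.1, ← eq_neg_of_add_eq_zero_left hv']
  have h3 := h v hv0
  nlinarith [ht.2, norm_nonneg (A v)]

lemma eu_det_sign {n : ℕ} (L M : Eu n →L[ℝ] Eu n) (hL : L.det ≠ 0)
    (h : ∀ v, ‖M v - L v‖ ≤ 1/2 * ‖L v‖) : 0 < M.det * L.det := by
  let e := L.toContinuousLinearEquivOfDetNeZero hL
  have he : ∀ v, e v = L v := fun v => rfl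
  let A : Eu n →L[ℝ] Eu n := (M - L).comp (e.symm : Eu n →L[ℝ] Eu n)
  have hA := eu_det_pos A (by
    intro v hv
    have := h (e.symm v)
    rw [← he, e.apply_symm_apply] at this
    have h2 : A v = M (e.symm v) - v := by simp [A, ← he]
    rw [h2]
    have := norm_pos_iff.2 hv
    linarith)
  have hM : M = (ContinuousLinearMap.id ℝ (Eu n) + A).comp L := by
    ext1 v
    simp [A, ← he]
  have : M.det = (ContinuousLinearMap.id ℝ (Eu n) + A).det * L.det := by
    conv_lhs => rw [hM]
    exact LinearMap.det_comp _ _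
  rw [this, mul_assoc]
  exact mul_pos hA (mul_self_pos.2 hL)

lemma eu_det_interp (n : ℕ) (S : ℝ) : ∃ w : ℕ → ℝ, ∀ A : Eu n →L[ℝ] Eu n,
    A.det = ∑ j ∈ Finset.range (n+1), w j * (A + (S + j) • ContinuousLinearMap.id ℝ (Eu n)).det := by
  refine ⟨fun j => (Lagrange.basis (Finset.range (n+1)) (fun j : ℕ => S + (j:ℝ)) j).eval 0, fun A => ?_⟩
  set p := LinearMap.charpoly (-(A : Eu n →ₗ[ℝ] Eu n)) with hp
  have hpe : ∀ t : ℝ, p.eval t = (A + t • ContinuousLinearMap.id ℝ (Eu n)).det := by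
    intro t
    rw [hp, LinearMap.eval_charpoly, ContinuousLinearMap.det]
    congr 1
    ext1 v
    simp [add_comm]
  have hdeg : p.degree < (Finset.range (n+1)).card := by
    refine (Polynomial.degree_le_natDegree).trans_lt ?_
    rw [hp, LinearMap.charpoly_natDegree]
    simp
    exact_mod_cast Nat.lt_succ_self n
  have := Lagrange.eq_interpolate (s := Finset.range (n+1)) (v := fun j : ℕ => S + (j:ℝ)) (f := p)
    (by intro a _ b _ h; simpa using h) hdeg
  have h0 : p.eval 0 = A.det := by
    rw [hpe]
    congr 1
    ext1 v
    simp
  rw [← h0, this, Lagrange.interpolate_apply, Polynomial.eval_finsetSum]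
  refine Finset.sum_congr rfl fun j _ => ?_
  simp [hpe, mul_comm]

lemma eu_bij {n : ℕ} (u : Eu n → Eu n) (K : NNReal) (hu : LipschitzWith K u) (s : ℝ) (hs : K < s) :
    Function.Bijective (fun x => u x + s • x) := by
  have hs0 : 0 < s := lt_of_le_of_lt K.2 hs
  constructor
  · intro x y hxy
    have h1 : s • (x - y) = u y - u x := by
      have : u x + s • x = u y + s • y := hxy
      rw [smul_sub, sub_eq_sub_iff_add_eq_add, add_comm, this, add_comm, add_comm]
    by_contra hne
    have hp : 0 < ‖x - y‖ := norm_pos_iff.2 (sub_ne_zero.2 hne)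
    have h2 : s * ‖x - y‖ ≤ K * ‖x - y‖ := by
      rw [← Real.norm_of_nonneg hs0.le, ← norm_smul, h1, norm_sub_rev x y]
      exact hu.norm_sub_le _ _
    nlinarith
  · intro y
    have hc : ContractingWith (K / s.toNNReal) (fun x => s⁻¹ • (y - u x)) := by
      constructor
      · rw [div_lt_one (by simpa using hs0)]
        exact NNReal.coe_lt_coe.1 (by rwa [Real.coe_toNNReal _ hs0.le])
      · refine LipschitzWith.of_dist_le_mul fun a b => ?_
        rw [dist_smul₀, dist_sub_left, Real.norm_of_nonneg (inv_nonneg.2 hs0.le), NNReal.coe_div, Real.coe_toNNReal _ hs0.le,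
          div_eq_inv_mul, mul_assoc]
        exact mul_le_mul_of_nonneg_left (hu.dist_le_mul _ _) (inv_nonneg.2 hs0.le)
    refine ⟨hc.fixedPoint, ?_⟩
    have h := hc.fixedPoint_isFixedPt
    set x := hc.fixedPoint
    have h : s⁻¹ • (y - u x) = x := h
    show u x + s • x = y
    have h2 : s • x = y - u x := by rw [← h, smul_inv_smul₀ hs0.ne', h]
    rw [h2]; abel

lemma eu_vol {n : ℕ} (u : Eu n → Eu n) (K : NNReal) (hu : LipschitzWith K u) (hd : Differentiable ℝ u)
    (s : ℝ) (hs : K < s) (B : Set (Eu n)) (hB : MeasurableSet B) :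
    ∫ x in B, (fderiv ℝ u x + s • ContinuousLinearMap.id ℝ (Eu n)).det =
      volume.real ((fun x => u x + s • x) '' B) := by
  have hs0 : 0 < s := lt_of_le_of_lt K.2 hs
  have h := integral_image_eq_integral_abs_det_fderiv_smul (volume : Measure (Eu n)) hB
    (f := fun x => u x + s • x)
    (f' := fun x => fderiv ℝ u x + s • ContinuousLinearMap.id ℝ (Eu n))
    (fun x _ => ((hd x).hasFDerivAt.add ((hasFDerivAt_id x).const_smul s)).hasFDerivWithinAt)
    (eu_bij u K hu s hs).1.injOn (fun _ => (1:ℝ))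
  rw [setIntegral_const, smul_eq_mul, mul_one] at h
  rw [h]
  refine integral_congr_ae (ae_of_all _ fun x => ?_)
  simp only [smul_eq_mul, mul_one]
  rw [abs_of_pos]
  have hb : ‖fderiv ℝ u x‖ ≤ K := norm_fderiv_le_of_lipschitz ℝ hu
  have h1 := eu_det_pos (s⁻¹ • fderiv ℝ u x) (by
    intro v hv
    have hp := norm_pos_iff.2 hv
    have : ‖fderiv ℝ u x v‖ ≤ K * ‖v‖ := (ContinuousLinearMap.le_of_opNorm_le _ hb v)
    rw [smul_apply, norm_smul, Real.norm_of_nonneg (inv_nonneg.2 hs0.le), inv_mul_lt_iff₀ hs0]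
    nlinarith)
  have h2 : fderiv ℝ u x + s • ContinuousLinearMap.id ℝ (Eu n) =
      s • (ContinuousLinearMap.id ℝ (Eu n) + s⁻¹ • fderiv ℝ u x) := by
    rw [smul_add, smul_inv_smul₀ hs0.ne', add_comm]
  rw [h2]
  have h3 : ∀ T : Eu n →L[ℝ] Eu n, (s • T).det = s ^ n * T.det := by
    intro T
    have := LinearMap.det_smul s (T : Eu n →ₗ[ℝ] Eu n)
    rw [finrank_euclideanSpace_fin] at this
    exact this
  rw [h3]
  positivity

lemma eu_int_eq_lip {n : ℕ} (u v : Eu n → Eu n) (hu : ContDiff ℝ 1 u) (hv : ContDiff ℝ 1 v)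
    (K : NNReal) (hKu : LipschitzWith K u) (hKv : LipschitzWith K v)
    (c : Eu n) (R : ℝ) (h : ∀ x, x ∉ Metric.ball c R → u x = v x) :
    ∫ x in Metric.ball c R, (fderiv ℝ u x).det = ∫ x in Metric.ball c R, (fderiv ℝ v x).det := by
  obtain ⟨w, hw⟩ := eu_det_interp n (K + 1)
  have key : ∀ u : Eu n → Eu n, ContDiff ℝ 1 u → LipschitzWith K u →
      ∫ x in Metric.ball c R, (fderiv ℝ u x).det =
      ∑ j ∈ Finset.range (n+1), w j * volume.real ((fun x => u x + ((K:ℝ) + 1 + j) • x) '' Metric.ball c R) := by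
    intro u hu hK
    have hcont : ∀ s : ℝ, Continuous fun x => (fderiv ℝ u x + s • ContinuousLinearMap.id ℝ (Eu n)).det :=
      fun s => ContinuousLinearMap.continuous_det.comp
        ((hu.continuous_fderiv (by simp)).add continuous_const)
    simp_rw [fun x => hw (fderiv ℝ u x)]
    rw [integral_finsetSum]
    · refine Finset.sum_congr rfl fun j _ => ?_
      rw [integral_const_mul, eu_vol u K hK (hu.differentiable (by simp)) _ _ _ measurableSet_ball]
      have : (0:ℝ) ≤ j := Nat.cast_nonneg j
      linarith
    · intro j _
      refine Integrable.const_mul ?_ _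
      exact ((hcont _).continuousOn.integrableOn_compact (isCompact_closedBall c R)).mono_set
        Metric.ball_subset_closedBall
  rw [key u hu hKu, key v hv hKv]
  refine Finset.sum_congr rfl fun j _ => ?_
  have hj : (0:ℝ) ≤ j := Nat.cast_nonneg j
  have himg : ∀ u : Eu n → Eu n, LipschitzWith K u →
      (fun x => u x + ((K:ℝ) + 1 + j) • x) '' Metric.ball c R =
      ((fun x => u x + ((K:ℝ) + 1 + j) • x) '' (Metric.ball c R)ᶜ)ᶜ := by
    intro u hu
    rw [image_compl_eq (eu_bij u K hu _ (by linarith)), compl_compl]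
  rw [himg u hKu, himg v hKv]
  congr 3
  refine image_congr fun x hx => ?_
  rw [h x hx]

lemma eu_int_eq {n : ℕ} (u v : Eu n → Eu n) (hu : ContDiff ℝ 1 u) (hv : ContDiff ℝ 1 v)
    (c : Eu n) (R : ℝ) (hR : 0 < R) (h : ∀ x, x ∉ Metric.ball c R → u x = v x) :
    ∫ x in Metric.ball c R, (fderiv ℝ u x).det = ∫ x in Metric.ball c R, (fderiv ℝ v x).det := by
  let χ : ContDiffBump c := ⟨R, R + 1, hR, by linarith⟩
  have hχ : ContDiff ℝ 1 χ := χ.contDiff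
  have hc : ∀ u : Eu n → Eu n, HasCompactSupport fun x => χ x • u x := fun u =>
    χ.hasCompactSupport.smul_right
  obtain ⟨K, hK⟩ := (hχ.smul hu).lipschitzWith_of_hasCompactSupport (hc u) (by simp)
  obtain ⟨K', hK'⟩ := (hχ.smul hv).lipschitzWith_of_hasCompactSupport (hc v) (by simp)
  have key := eu_int_eq_lip _ _ (hχ.smul hu) (hχ.smul hv) (max K K') (hK.weaken (le_max_left _ _))
    (hK'.weaken (le_max_right _ _)) c R (fun x hx => by
      show χ x • u x = χ x • v x
      rw [h x hx])
  have hf : ∀ u : Eu n → Eu n, ∀ x ∈ Metric.ball c R, (fderiv ℝ (fun x => χ x • u x) x).det = (fderiv ℝ u x).det := by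
    intro u x hx
    congr 1
    refine Filter.EventuallyEq.fderiv_eq ?_
    filter_upwards [Metric.isOpen_ball.mem_nhds hx] with y hy
    rw [χ.one_of_mem_closedBall (Metric.ball_subset_closedBall hy), one_smul]
  rw [← setIntegral_congr_fun measurableSet_ball (hf u), ← setIntegral_congr_fun measurableSet_ball (hf v)]
  exact key

lemma eu_phi (n : ℕ) (η : ℝ) (hη : 0 < η) : ∃ Φ : Eu n → Eu n, ContDiff ℝ 1 Φ ∧
    (∀ y, 0 ≤ (fderiv ℝ Φ y).det) ∧ 0 < (fderiv ℝ Φ 0).det ∧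
    ∀ y, η ≤ ‖y‖ → (fderiv ℝ Φ y).det = 0 := by
  set ε := η / (n+1) with hε
  have hε0 : 0 < ε := by positivity
  let r : ℝ → ℝ := fun t => max 0 (ε - |t|)
  have hr : Continuous r := by fun_prop
  let θ : ℝ → ℝ := fun x => ∫ t in (0:ℝ)..x, r t
  have hθ : ∀ x, HasDerivAt θ (r x) x := fun x => hr.integral_hasStrictDerivAt 0 x |>.hasDerivAt
  have hθc : ContDiff ℝ 1 θ := by
    rw [contDiff_one_iff_deriv]
    refine ⟨fun x => (hθ x).differentiableAt, ?_⟩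
    rw [show deriv θ = r from funext fun x => (hθ x).deriv]
    exact hr
  let Φ : Eu n → Eu n := fun y => WithLp.toLp 2 (fun i => θ (y i))
  have hΦ : ∀ y, HasFDerivAt Φ (Matrix.toEuclideanCLM (𝕜 := ℝ) (Matrix.diagonal fun i => r (y i))) y := by
    intro y
    rw [← hasFDerivWithinAt_univ, hasFDerivWithinAt_euclidean]
    intro i
    have h1 : HasFDerivAt (fun y : Eu n => y i) (EuclideanSpace.proj i : Eu n →L[ℝ] ℝ) y :=
      (EuclideanSpace.proj i : Eu n →L[ℝ] ℝ).hasFDerivAt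
    have h2 := (hθ (y i)).comp_hasFDerivAt y h1
    refine (h2.congr_fderiv ?_).hasFDerivWithinAt
    ext1 v
    simp [Matrix.mulVec_diagonal]
  have hdet : ∀ y, (fderiv ℝ Φ y).det = ∏ i, r (y i) := by
    intro y
    rw [(hΦ y).fderiv, ← Matrix.det_diagonal, ContinuousLinearMap.det]
    rw [← LinearMap.det_toLin (EuclideanSpace.basisFun (Fin n) ℝ).toBasis]
    congr 1
  refine ⟨Φ, ?_, ?_, ?_, ?_⟩
  · rw [contDiff_euclidean]
    intro i
    exact hθc.comp (EuclideanSpace.proj i : Eu n →L[ℝ] ℝ).contDiff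
  · intro y
    rw [hdet]
    exact Finset.prod_nonneg fun i _ => le_max_left _ _
  · rw [hdet]
    refine Finset.prod_pos fun i _ => ?_
    simp [r, hε0]
  · intro y hy
    rw [hdet]
    by_contra hne
    rw [← ne_eq, Finset.prod_ne_zero_iff] at hne
    have h1 : ∀ i, |y i| ≤ ε := by
      intro i
      by_contra hc
      exact hne i (Finset.mem_univ i) (max_eq_left (by linarith))
    have h2 : ‖y‖ ^ 2 ≤ n * ε ^ 2 := by
      rw [EuclideanSpace.norm_sq_eq]
      refine (Finset.sum_le_card_nsmul _ _ (ε^2) fun i _ => ?_).trans (by simp)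
      rw [Real.norm_eq_abs]
      exact pow_le_pow_left₀ (abs_nonneg _) (h1 i) 2
    have h3 : η = (n+1) * ε := by rw [hε]; field_simp
    have h4 : η^2 ≤ ‖y‖^2 := pow_le_pow_left₀ hη.le hy 2
    have h5 : (0:ℝ) ≤ n := Nat.cast_nonneg n
    rw [h3] at h4
    nlinarith [pow_pos hε0 2, mul_nonneg h5 h5, mul_nonneg h5 (pow_pos hε0 2).le, mul_nonneg (mul_nonneg h5 h5) (pow_pos hε0 2).le]

/-- the smooth version -/
lemma eu_smooth {n : ℕ} (u v : Eu n → Eu n) (hu : ContDiff ℝ 1 u) (hv : ContDiff ℝ 1 v)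
    (c : Eu n) (R : ℝ) (hR : 0 < R) (h : ∀ x, x ∉ Metric.ball c R → u x = v x) (σ : ℝ)
    (hu0 : ∀ x ∈ Metric.closedBall c R, u x = 0 → σ * (fderiv ℝ u x).det < 0)
    (hv0 : ∀ x ∈ Metric.closedBall c R, v x = 0 → 0 < σ * (fderiv ℝ v x).det)
    (hz : ∃ x ∈ Metric.ball c R, v x = 0) : False := by
  have hcd : ∀ u : Eu n → Eu n, ContDiff ℝ 1 u → Continuous fun x => (fderiv ℝ u x).det := fun u hu =>
    ContinuousLinearMap.continuous_det.comp (hu.continuous_fderiv (by simp))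
  have key : ∀ (u : Eu n → Eu n), ContDiff ℝ 1 u → ∀ σ : ℝ,
      (∀ x ∈ Metric.closedBall c R, u x = 0 → 0 < σ * (fderiv ℝ u x).det) →
      ∃ η > 0, ∀ x ∈ Metric.closedBall c R, ‖u x‖ < η → 0 < σ * (fderiv ℝ u x).det := by
    intro u hu σ hu0
    let T := Metric.closedBall c R ∩ {x | σ * (fderiv ℝ u x).det ≤ 0}
    have hT : IsCompact T := (isCompact_closedBall c R).inter_right
      (isClosed_le (continuous_const.mul (hcd u hu)) continuous_const)
    rcases T.eq_empty_or_nonempty with hE | hne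
    · refine ⟨1, one_pos, fun x hx _ => ?_⟩
      by_contra hc
      exact (hE ▸ (show x ∈ T from ⟨hx, not_lt.1 hc⟩) : x ∈ (∅ : Set (Eu n)))
    · obtain ⟨x0, hx0, hmin⟩ := hT.exists_isMinOn hne (f := fun x => ‖u x‖) hu.continuous.norm.continuousOn
      refine ⟨‖u x0‖, ?_, ?_⟩
      · rw [gt_iff_lt, norm_pos_iff]
        intro h0
        exact absurd (hu0 x0 hx0.1 h0) (not_lt.2 hx0.2)
      · intro x hx hlt
        by_contra hc
        exact absurd (hmin (show x ∈ T from ⟨hx, not_lt.1 hc⟩)) (not_le.2 hlt)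
  obtain ⟨η1, hη1, hu1⟩ := key u hu (-σ) (fun x hx h0 => by linarith [hu0 x hx h0])
  obtain ⟨η2, hη2, hv1⟩ := key v hv σ hv0
  obtain ⟨Φ, hΦ, hΦ0, hΦ1, hΦ2⟩ := eu_phi n (min η1 η2) (lt_min hη1 hη2)
  have hint := eu_int_eq _ _ (hΦ.comp hu) (hΦ.comp hv) c R hR (fun x hx => by
    simp only [Function.comp, h x hx])
  have hdet : ∀ (u : Eu n → Eu n), ContDiff ℝ 1 u → ∀ x, (fderiv ℝ (Φ ∘ u) x).det =
      (fderiv ℝ Φ (u x)).det * (fderiv ℝ u x).det := by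
    intro u hu x
    rw [fderiv_comp x (hΦ.differentiable (by simp) _) (hu.differentiable (by simp) _)]
    exact LinearMap.det_comp _ _
  have hI1 : ∫ x in Metric.ball c R, σ * (fderiv ℝ (Φ ∘ u) x).det ≤ 0 := by
    refine setIntegral_nonpos measurableSet_ball fun x hx => ?_
    rw [hdet u hu]
    by_cases hlt : ‖u x‖ < min η1 η2
    · have := hu1 x (Metric.ball_subset_closedBall hx) (hlt.trans_le (min_le_left _ _))
      nlinarith [hΦ0 (u x)]
    · rw [hΦ2 _ (not_lt.1 hlt)]; simp
  have hnn : ∀ x ∈ Metric.ball c R, 0 ≤ σ * (fderiv ℝ (Φ ∘ v) x).det := by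
    intro x hx
    rw [hdet v hv]
    by_cases hlt : ‖v x‖ < min η1 η2
    · have := hv1 x (Metric.ball_subset_closedBall hx) (hlt.trans_le (min_le_right _ _))
      nlinarith [hΦ0 (v x)]
    · rw [hΦ2 _ (not_lt.1 hlt)]; simp
  have hcont : Continuous fun x => σ * (fderiv ℝ (Φ ∘ v) x).det :=
    continuous_const.mul (hcd _ (hΦ.comp hv))
  have hI2 : 0 < ∫ x in Metric.ball c R, σ * (fderiv ℝ (Φ ∘ v) x).det := by
    obtain ⟨z, hz, hz0⟩ := hz
    rw [setIntegral_pos_iff_support_of_nonneg_ae]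
    · have ho : IsOpen (Function.support (fun x => σ * (fderiv ℝ (Φ ∘ v) x).det) ∩ Metric.ball c R) :=
        hcont.isOpen_support.inter Metric.isOpen_ball
      refine ho.measure_pos _ ⟨z, ?_, hz⟩
      rw [Function.mem_support, hdet v hv, hz0]
      have := hv0 z (Metric.ball_subset_closedBall hz) hz0
      have h3 : 0 < (fderiv ℝ Φ 0).det * (σ * (fderiv ℝ v z).det) := mul_pos hΦ1 this
      intro h4
      nlinarith
    · exact (ae_restrict_iff' measurableSet_ball).2 (ae_of_all _ hnn)
    · exact (hcont.continuousOn.integrableOn_compact (isCompact_closedBall c R)).mono_set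
        Metric.ball_subset_closedBall
  rw [integral_const_mul] at hI1 hI2
  rw [hint] at hI1
  linarith

lemma eu_rev {n : ℕ} {G : Eu n → Eu n} {L : Eu n →L[ℝ] Eu n} {x : Eu n} (h : HasFDerivAt G L x)
    (hL : L.det ≠ 0) : (fun y => y - x) =O[𝓝 x] fun y => G y - G x := by
  let e := L.toContinuousLinearEquivOfDetNeZero hL
  have h1 : (fun y => y - x) =O[𝓝 x] fun y => L (y - x) := e.isBigO_sub_rev (𝓝 x) x
  have h2 : (fun y => G y - G x - L (y - x)) =o[𝓝 x] fun y => L (y - x) := h.isLittleO.trans_isBigO h1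
  have h3 := h2.right_isBigO_add
  refine h1.trans (h3.congr_right fun y => ?_)
  abel

lemma eu_local {n : ℕ} (G : Eu n → Eu n) (x : Eu n) (hc : ContinuousAt G x)
    (hz : G x = 0 → ∃ L : Eu n →L[ℝ] Eu n, HasFDerivAt G L x ∧ L.det ≠ 0) (ε : ℝ) (hε : 0 < ε) :
    ∃ g : Eu n → Eu n, ContDiff ℝ 1 g ∧ ∀ᶠ y in 𝓝 x, ‖g y - G y‖ ≤ ε * ‖G y‖ := by
  by_cases h0 : G x = 0
  · obtain ⟨L, hL, hd⟩ := hz h0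
    refine ⟨fun y => L (y - x), L.contDiff.comp (contDiff_id.sub contDiff_const), ?_⟩
    have h2 := hL.isLittleO.trans_isBigO (eu_rev hL hd)
    filter_upwards [h2.bound hε] with y hy
    simp only [h0, sub_zero] at hy
    rwa [norm_sub_rev]
  · refine ⟨fun _ => G x, contDiff_const, ?_⟩
    have h1 : Tendsto (fun y => ‖G x - G y‖) (𝓝 x) (𝓝 0) := by
      have := (tendsto_const_nhds (x := G x)).sub hc
      simpa using this.norm
    have h2 : Tendsto (fun y => ε * ‖G y‖) (𝓝 x) (𝓝 (ε * ‖G x‖)) := tendsto_const_nhds.mul hc.norm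
    have h3 : 0 < ε * ‖G x‖ := mul_pos hε (norm_pos_iff.2 h0)
    exact (h1.eventually_lt h2 h3).mono fun y hy => hy.le

lemma eu_select {n : ℕ} (t : Eu n → Set (Eu n)) (ht : ∀ x, Convex ℝ (t x))
    (h : ∀ x, ∃ g : Eu n → Eu n, ContDiff ℝ 1 g ∧ ∀ᶠ y in 𝓝 x, g y ∈ t y) :
    ∃ g : Eu n → Eu n, ContDiff ℝ 1 g ∧ ∀ y, g y ∈ t y := by
  obtain ⟨g, hg⟩ := exists_contMDiffMap_forall_mem_convex_of_local (n := 1) 𝓘(ℝ, Eu n) ht (fun x => by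
    obtain ⟨g, hg, hy⟩ := h x
    exact ⟨_, hy, g, hg.contMDiff.contMDiffOn, fun y hy => hy⟩)
  exact ⟨g, g.contMDiff.contDiff, hg⟩

lemma eu_convex {n : ℕ} (a : Eu n) (r : ℝ) : Convex ℝ {v : Eu n | ‖v - a‖ ≤ r} := by
  have : {v : Eu n | ‖v - a‖ ≤ r} = Metric.closedBall a r := by
    ext v; simp [dist_eq_norm]
  rw [this]; exact convex_closedBall a r

lemma eu_sign {n : ℕ} (G u : Eu n → Eu n) (x : Eu n) (L M : Eu n →L[ℝ] Eu n)
    (hG : HasFDerivAt G L x) (hu : HasFDerivAt u M x) (h0 : G x = 0) (hu0 : u x = 0) (hL : L.det ≠ 0)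
    (h : ∀ᶠ y in 𝓝 x, ‖u y - G y‖ ≤ 1/2 * ‖G y‖) : 0 < M.det * L.det := by
  refine eu_det_sign L M hL fun v => ?_
  have h1 := (hG.hasLineDerivAt v).tendsto_slope_zero_right
  have h2 := (hu.hasLineDerivAt v).tendsto_slope_zero_right
  have h3 : Tendsto (fun t : ℝ => x + t • v) (𝓝[>] 0) (𝓝 x) := by
    have : Tendsto (fun t : ℝ => x + t • v) (𝓝 0) (𝓝 (x + (0:ℝ) • v)) :=
      (by fun_prop : Continuous fun t : ℝ => x + t • v).tendsto 0
    simp only [zero_smul, add_zero] at this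
    exact this.mono_left nhdsWithin_le_nhds
  refine le_of_tendsto_of_tendsto (h2.sub h1).norm (h1.norm.const_mul (1/2)) ?_
  filter_upwards [h3.eventually h, self_mem_nhdsWithin] with t ht ht0
  have ht0 : 0 < t := ht0
  rw [h0, hu0, sub_zero, sub_zero, ← smul_sub, norm_smul, norm_smul, Real.norm_of_nonneg (inv_nonneg.2 ht0.le)]
  have := mul_le_mul_of_nonneg_left ht (inv_nonneg.2 ht0.le)
  linarith

lemma eu_degree {n : ℕ} (G0 G1 : Eu n → Eu n) (c : Eu n) (R : ℝ) (hR : 0 < R) (σ : ℝ)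
    (hc0 : ∀ x ∈ Metric.closedBall c R, ContinuousAt G0 x)
    (hc1 : ∀ x ∈ Metric.closedBall c R, ContinuousAt G1 x)
    (hz0 : ∀ x ∈ Metric.closedBall c R, G0 x = 0 → ∃ L : Eu n →L[ℝ] Eu n, HasFDerivAt G0 L x ∧ σ * L.det < 0)
    (hz1 : ∀ x ∈ Metric.closedBall c R, G1 x = 0 → ∃ L : Eu n →L[ℝ] Eu n, HasFDerivAt G1 L x ∧ 0 < σ * L.det)
    (hs : ∀ x ∈ Metric.sphere c R, G1 x ≠ 0 ∧ ‖G0 x - G1 x‖ ≤ 1/8 * ‖G1 x‖)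
    (hz : ∃ x ∈ Metric.ball c R, G1 x = 0) : False := by
  have hz0' : ∀ x ∈ Metric.closedBall c R, G0 x = 0 → ∃ L : Eu n →L[ℝ] Eu n, HasFDerivAt G0 L x ∧ L.det ≠ 0 := by
    intro x hx h
    obtain ⟨L, h1, h2⟩ := hz0 x hx h
    exact ⟨L, h1, fun h => by simp [h] at h2⟩
  have hz1' : ∀ x ∈ Metric.closedBall c R, G1 x = 0 → ∃ L : Eu n →L[ℝ] Eu n, HasFDerivAt G1 L x ∧ L.det ≠ 0 := by
    intro x hx h
    obtain ⟨L, h1, h2⟩ := hz1 x hx h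
    exact ⟨L, h1, fun h => by simp [h] at h2⟩
  -- approximate G1
  obtain ⟨v, hv, hvG⟩ := eu_select (fun y => {w | y ∈ Metric.closedBall c R → ‖w - G1 y‖ ≤ 1/8 * ‖G1 y‖})
    (fun y => by
      by_cases hy : y ∈ Metric.closedBall c R
      · simp only [hy, forall_const]; exact eu_convex _ _
      · simp only [hy, false_imp_iff]; exact convex_univ)
    (fun x => by
      by_cases hx : x ∈ Metric.closedBall c R
      · obtain ⟨g, hg, hg'⟩ := eu_local G1 x (hc1 x hx) (hz1' x hx) (1/8) (by norm_num)
        exact ⟨g, hg, hg'.mono fun y hy _ => hy⟩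
      · refine ⟨fun _ => 0, contDiff_const, ?_⟩
        filter_upwards [Metric.isClosed_closedBall.isOpen_compl.mem_nhds hx] with y hy hy'
        exact absurd hy' hy)
  have hvG : ∀ y ∈ Metric.closedBall c R, ‖v y - G1 y‖ ≤ 1/8 * ‖G1 y‖ := hvG
  have hsv : ∀ x ∈ Metric.sphere c R, ‖v x - G0 x‖ < 1/2 * ‖G0 x‖ := by
    intro x hx
    obtain ⟨h1, h2⟩ := hs x hx
    have h3 := hvG x (Metric.sphere_subset_closedBall hx)
    have h4 : 0 < ‖G1 x‖ := norm_pos_iff.2 h1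
    have h5 : ‖v x - G0 x‖ ≤ ‖v x - G1 x‖ + ‖G0 x - G1 x‖ := by
      rw [norm_sub_rev (G0 x)]
      exact norm_sub_le_norm_sub_add_norm_sub _ _ _
    have h6 : ‖G1 x‖ ≤ ‖G0 x‖ + ‖G0 x - G1 x‖ := by
      have := norm_sub_le (G0 x) (G0 x - G1 x)
      simpa using this
    linarith
  -- approximate G0 rel boundary
  obtain ⟨u, hu, huG⟩ := eu_select (fun y => {w | (y ∈ Metric.ball c R → ‖w - G0 y‖ ≤ 1/2 * ‖G0 y‖) ∧
      (y ∉ Metric.ball c R → w = v y)})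
    (fun y => by
      by_cases hy : y ∈ Metric.ball c R
      · simp only [hy, forall_const, not_true_eq_false, false_imp_iff, and_true]; exact eu_convex _ _
      · simp only [hy, false_imp_iff, not_false_eq_true, forall_const, true_and]
        exact convex_singleton _)
    (fun x => by
      by_cases hx : x ∈ Metric.ball c R
      · obtain ⟨g, hg, hg'⟩ := eu_local G0 x (hc0 x (Metric.ball_subset_closedBall hx))
          (hz0' x (Metric.ball_subset_closedBall hx)) (1/2) (by norm_num)
        refine ⟨g, hg, ?_⟩
        filter_upwards [hg', Metric.isOpen_ball.mem_nhds hx] with y hy hyb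
        exact ⟨fun _ => hy, fun h => absurd hyb h⟩
      · refine ⟨v, hv, ?_⟩
        by_cases hx' : x ∈ Metric.closedBall c R
        · have hxs : x ∈ Metric.sphere c R := by
            rw [Metric.mem_ball, not_lt] at hx
            exact le_antisymm hx' hx
          have hcx := hc0 x hx'
          have hev : ∀ᶠ y in 𝓝 x, ‖v y - G0 y‖ < 1/2 * ‖G0 y‖ :=
            ((hv.continuous.continuousAt.sub hcx).norm).eventually_lt (hcx.norm.const_mul (1/2)) (hsv x hxs)
          filter_upwards [hev] with y hy
          exact ⟨fun _ => hy.le, fun _ => rfl⟩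
        · filter_upwards [Metric.isClosed_closedBall.isOpen_compl.mem_nhds hx'] with y hy
          exact ⟨fun h => absurd (Metric.ball_subset_closedBall h) hy, fun _ => rfl⟩)
  have huB : ∀ y ∈ Metric.ball c R, ‖u y - G0 y‖ ≤ 1/2 * ‖G0 y‖ := fun y => (huG y).1
  have huv : ∀ y, y ∉ Metric.ball c R → u y = v y := fun y => (huG y).2
  have hsph : ∀ x ∈ Metric.closedBall c R, x ∉ Metric.ball c R → v x ≠ 0 := by
    intro x hx hxb h0
    have hxs : x ∈ Metric.sphere c R := by
      rw [Metric.mem_ball, not_lt] at hxb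
      exact le_antisymm hx hxb
    have h3 := hvG x hx
    rw [h0, zero_sub, norm_neg] at h3
    have := norm_pos_iff.2 (hs x hxs).1
    linarith
  refine eu_smooth u v hu hv c R hR huv σ ?_ ?_ ?_
  · intro x hx h0
    have hxb : x ∈ Metric.ball c R := by
      by_contra hxb
      exact hsph x hx hxb (by rw [← huv x hxb, h0])
    have hG : G0 x = 0 := by
      have := huB x hxb
      rw [h0, zero_sub, norm_neg] at this
      exact norm_le_zero_iff.1 (by linarith)
    obtain ⟨L, hL, hLs⟩ := hz0 x hx hG
    have := eu_sign G0 u x L _ hL (hu.differentiable (by simp) x).hasFDerivAt hG h0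
      (fun h => by simp [h] at hLs) (by
        filter_upwards [Metric.isOpen_ball.mem_nhds hxb] with y hy using huB y hy)
    by_contra hcon
    nlinarith [mul_self_nonneg σ, mul_nonneg (not_lt.1 hcon) (neg_nonneg.2 hLs.le), mul_pos this (sq_pos_of_ne_zero (show σ ≠ 0 by rintro rfl; simp at hLs))]
  · intro x hx h0
    have hxb : x ∈ Metric.ball c R := by
      by_contra hxb
      exact hsph x hx hxb h0
    have hG : G1 x = 0 := by
      have := hvG x hx
      rw [h0, zero_sub, norm_neg] at this
      exact norm_le_zero_iff.1 (by linarith [norm_nonneg (G1 x)])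
    obtain ⟨L, hL, hLs⟩ := hz1 x hx hG
    have := eu_sign G1 v x L _ hL (hv.differentiable (by simp) x).hasFDerivAt hG h0
      (fun h => by simp [h] at hLs) (by
        filter_upwards [Metric.isOpen_ball.mem_nhds hxb] with y hy
        have := hvG y (Metric.ball_subset_closedBall hy)
        linarith [norm_nonneg (G1 y)])
    by_contra hcon
    nlinarith [mul_nonneg (neg_nonneg.2 (not_lt.1 hcon)) hLs.le, mul_pos this (sq_pos_of_ne_zero (show σ ≠ 0 by rintro rfl; simp at hLs))]
  · obtain ⟨x, hx, h0⟩ := hz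
    refine ⟨x, hx, ?_⟩
    have := hvG x (Metric.ball_subset_closedBall hx)
    rw [h0, sub_zero, norm_zero, mul_zero] at this
    exact norm_le_zero_iff.1 this

lemma eu_const {n : ℕ} (U S : Set (Eu n)) (d : Eu n → ℝ) (hS : IsPreconnected S) (hSU : S ⊆ U)
    (hd : ∀ x ∈ S, d x ≠ 0)
    (hF : ∀ x ∈ S, ¬ (x ∈ closure {y | y ∈ U ∧ 0 < d y} ∧ x ∈ closure {y | y ∈ U ∧ d y < 0}))
    (x y : Eu n) (hx : x ∈ S) (hy : y ∈ S) (hxp : 0 < d x) (hyn : d y < 0) : False := by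
  have h := hS (closure {y | y ∈ U ∧ d y < 0})ᶜ (closure {y | y ∈ U ∧ 0 < d y})ᶜ
    isClosed_closure.isOpen_compl isClosed_closure.isOpen_compl
    (fun z hz => by
      by_contra hc
      simp only [mem_union, mem_compl_iff, not_or, not_not] at hc
      exact hF z hz ⟨hc.2, hc.1⟩)
    ⟨x, hx, fun hc => hF x hx ⟨subset_closure ⟨hSU hx, hxp⟩, hc⟩⟩
    ⟨y, hy, fun hc => hF y hy ⟨hc, subset_closure ⟨hSU hy, hyn⟩⟩⟩
  obtain ⟨z, hz, h1, h2⟩ := h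
  rcases lt_or_gt_of_ne (hd z hz) with h | h
  · exact h1 (subset_closure ⟨hSU hz, h⟩)
  · exact h2 (subset_closure ⟨hSU hz, h⟩)

lemma eu_darboux {n : ℕ} (U : Set (Eu n)) (hU : IsOpen U) (hUc : IsPreconnected U)
    (g : Eu n → Eu n) (g' : Eu n → Eu n →L[ℝ] Eu n) (hg : ∀ x ∈ U, HasFDerivAt g (g' x) x)
    (hd : ∀ x ∈ U, (g' x).det ≠ 0) (p q : Eu n) (hp : p ∈ U) (hq : q ∈ U)
    (hpp : 0 < (g' p).det) (hqn : (g' q).det < 0) : False := by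
  set d : Eu n → ℝ := fun x => (g' x).det with hdd
  set C := closure {y | y ∈ U ∧ 0 < d y} ∩ closure {y | y ∈ U ∧ d y < 0} with hC
  have hCc : IsClosed C := isClosed_closure.inter isClosed_closure
  have hcont : ∀ x ∈ U, ContinuousAt g x := fun x hx => (hg x hx).continuousAt
  obtain ⟨b, hbU, hbC⟩ : ∃ b ∈ U, b ∈ C := by
    by_contra hcon
    push Not at hcon
    exact eu_const U U d hUc subset_rfl hd hcon p q hp hq hpp hqn
  let F := U ∩ C
  have : BaireSpace F := (hU.isGδ.inter hCc.isGδ).baireSpace_of_t2Space_locallyCompactSpace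
  have : Nonempty F := ⟨⟨b, hbU, hbC⟩⟩
  have hgF : Continuous fun x : F => g x :=
    continuous_iff_continuousAt.2 fun x => (hcont x x.2.1).comp continuous_subtype_val.continuousAt
  let S : ℕ → Set F := fun m => {x | ∀ y ∈ U, dist y (x : Eu n) < 1 / ((m:ℝ)+1) →
    ‖y - x‖ ≤ ((m:ℝ)+1) * ‖g y - g x‖}
  have hScl : ∀ m, IsClosed (S m) := by
    intro m
    have : S m = ⋂ y ∈ U, {x : F | dist y (x : Eu n) < 1 / ((m:ℝ)+1) →
      ‖y - x‖ ≤ ((m:ℝ)+1) * ‖g y - g x‖} := by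
      ext x; simp [S]
    rw [this]
    refine isClosed_biInter fun y _ => ?_
    refine isClosed_imp ?_ ?_
    · exact isOpen_lt (by fun_prop) continuous_const
    · exact isClosed_le (by fun_prop) (continuous_const.mul (continuous_const.sub hgF).norm)
  have hSU : ⋃ m, S m = univ := by
    refine eq_univ_of_forall fun x => ?_
    obtain ⟨k, hk⟩ := (eu_rev (hg x x.2.1) (hd x x.2.1)).bound
    obtain ⟨r, hr, hrk⟩ := Metric.eventually_nhds_iff.1 hk
    obtain ⟨m1, hm1⟩ := exists_nat_gt k
    obtain ⟨m2, hm2⟩ := exists_nat_one_div_lt hr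
    refine mem_iUnion.2 ⟨max m1 m2, fun y _ hy => ?_⟩
    have h1 : 1 / (((max m1 m2 : ℕ) : ℝ) + 1) ≤ 1 / ((m2:ℝ) + 1) := by
      apply one_div_le_one_div_of_le (by positivity)
      have : (m2:ℝ) ≤ (max m1 m2 : ℕ) := by exact_mod_cast le_max_right _ _
      linarith
    have h2 := hrk (hy.trans (h1.trans_lt hm2))
    refine h2.trans (mul_le_mul_of_nonneg_right ?_ (norm_nonneg _))
    have : (m1:ℝ) ≤ (max m1 m2 : ℕ) := by exact_mod_cast le_max_left _ _
    linarith
  obtain ⟨m, a, ha⟩ := nonempty_interior_of_iUnion_of_closed hScl hSU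
  rw [mem_interior_iff_mem_nhds, Metric.mem_nhds_iff] at ha
  obtain ⟨ρ0, hρ0, hball⟩ := ha
  obtain ⟨a, haU, haC⟩ := a
  set κ : ℝ := (m:ℝ) + 1 with hκ
  have hκ0 : 0 < κ := by positivity
  obtain ⟨ρ2, hρ2, hb2⟩ := Metric.isOpen_iff.1 hU a haU
  obtain ⟨ρ, hρ, hρa, hρb, hρc⟩ : ∃ ρ > 0, ρ ≤ ρ0 ∧ 3 * ρ ≤ ρ2 ∧ 3 * ρ ≤ 1 / κ := by
    refine ⟨min ρ0 (min (ρ2/3) (1/κ/3)), by positivity, min_le_left _ _, ?_, ?_⟩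
    · have := (min_le_right ρ0 (min (ρ2/3) (1/κ/3))).trans (min_le_left _ _)
      linarith
    · have := (min_le_right ρ0 (min (ρ2/3) (1/κ/3))).trans (min_le_right _ _)
      linarith
  have hsub : ∀ y, dist y a ≤ 2 * ρ → y ∈ U := fun y hy => hb2 (Metric.mem_ball.2 (by linarith))
  have hlow : ∀ x ∈ C, dist x a < ρ → ∀ y, dist y a ≤ 2 * ρ → ‖y - x‖ ≤ κ * ‖g y - g x‖ := by
    intro x hx hxa y hy
    have hxU : x ∈ U := hsub x (by linarith)
    have : (⟨x, hxU, hx⟩ : F) ∈ S m := hball (by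
      rw [Metric.mem_ball, Subtype.dist_eq]; linarith)
    refine this y (hsub y hy) ?_
    show dist y x < 1 / κ
    have := dist_triangle_right y x a
    linarith
  obtain ⟨ρ1', hρ1', hga⟩ := Metric.continuousAt_iff.1 (hcont a haU) (ρ / (16 * κ)) (by positivity)
  obtain ⟨ρ1, hρ1, hρ1a, hρ1b⟩ : ∃ ρ1 > 0, ρ1 ≤ ρ1' ∧ ρ1 ≤ ρ :=
    ⟨min ρ1' ρ, lt_min hρ1' hρ, min_le_left _ _, min_le_right _ _⟩
  have hda : d a ≠ 0 := hd a haU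
  have hB : ∀ x ∈ C, dist x a < ρ1 → 0 < d a * d x := by
    intro x hx hxa
    have hxU : x ∈ U := hsub x (by linarith)
    by_contra hneg
    have hneg : d a * d x < 0 := lt_of_le_of_ne (not_lt.1 hneg) (mul_ne_zero hda (hd x hxU))
    refine eu_degree (fun y => g y - g x) (fun y => g y - g a) a (2 * ρ) (by positivity) (d a)
      ?_ ?_ ?_ ?_ ?_ ⟨a, Metric.mem_ball_self (by positivity), sub_self _⟩
    · exact fun y hy => (hcont y (hsub y hy)).sub continuousAt_const
    · exact fun y hy => (hcont y (hsub y hy)).sub continuousAt_const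
    · intro y hy h0
      have h1 := hlow x hx (by linarith) y hy
      have h0 : g y - g x = 0 := h0
      rw [h0, norm_zero, mul_zero, norm_le_zero_iff, sub_eq_zero] at h1
      subst h1
      exact ⟨g' y, (hg y hxU).sub_const _, hneg⟩
    · intro y hy h0
      have h1 := hlow a haC (by simpa using hρ) y hy
      have h0 : g y - g a = 0 := h0
      rw [h0, norm_zero, mul_zero, norm_le_zero_iff, sub_eq_zero] at h1
      subst h1
      exact ⟨g' y, (hg y haU).sub_const _, mul_self_pos.2 hda⟩
    · intro y hy
      have hy : dist y a = 2 * ρ := hy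
      have h1 := hlow a haC (by simpa using hρ) y hy.le
      rw [← dist_eq_norm, hy] at h1
      have h2 : 2 * ρ / κ ≤ ‖g y - g a‖ := by rw [div_le_iff₀ hκ0]; linarith
      have h3 : 0 < ρ / κ := by positivity
      have h4 := hga (hxa.trans_le hρ1a)
      rw [dist_eq_norm] at h4
      have h5 : ρ / (16 * κ) = (ρ / κ) / 16 := by field_simp
      have h6 : 2 * ρ / κ = 2 * (ρ / κ) := by ring
      refine ⟨fun h => ?_, ?_⟩
      · have h : g y - g a = 0 := h
        rw [h, norm_zero] at h2
        linarith
      · show ‖g y - g x - (g y - g a)‖ ≤ 1/8 * ‖g y - g a‖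
        rw [sub_sub_sub_cancel_left, norm_sub_rev]
        linarith
  -- a nearby point of opposite sign
  obtain ⟨z, hzU, hza, hzd⟩ : ∃ z ∈ U, dist z a < ρ1 / 2 ∧ d a * d z < 0 := by
    rcases lt_or_gt_of_ne hda with h | h
    · obtain ⟨z, hz, hzd⟩ := Metric.mem_closure_iff.1 haC.1 (ρ1/2) (by positivity)
      exact ⟨z, hz.1, by rwa [dist_comm], mul_neg_of_neg_of_pos h hz.2⟩
    · obtain ⟨z, hz, hzd⟩ := Metric.mem_closure_iff.1 haC.2 (ρ1/2) (by positivity)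
      exact ⟨z, hz.1, by rwa [dist_comm], mul_neg_of_pos_of_neg h hz.2⟩
  obtain ⟨x, hxT, hmin⟩ := ((isCompact_closedBall z (dist z a)).inter_left hCc).exists_isMinOn
    ⟨a, haC, by rw [Metric.mem_closedBall, dist_comm]⟩
    (f := fun x => dist x z) (by fun_prop)
  obtain ⟨hxC, hxz⟩ := hxT
  rw [Metric.mem_closedBall] at hxz
  have hxa : dist x a < ρ1 := by
    have := dist_triangle x z a
    linarith
  have hxU : x ∈ U := hsub x (by linarith)
  have hxd := hB x hxC hxa
  have hzC : z ∉ C := fun h => by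
    have := hB z h (by linarith)
    linarith
  set D := dist x z with hD
  have hD0 : 0 < D := dist_pos.2 fun h => hzC (h ▸ hxC)
  have hbU : Metric.ball z D ⊆ U := by
    intro y hy
    rw [Metric.mem_ball] at hy
    have := dist_triangle y z a
    exact hsub y (by linarith)
  have hbC : ∀ y ∈ Metric.ball z D, y ∉ C := by
    intro y hy hyC
    rw [Metric.mem_ball] at hy
    have : D ≤ dist y z := hmin (show y ∈ C ∩ _ from ⟨hyC, Metric.mem_closedBall.2 (hy.le.trans hxz)⟩)
    linarith
  have hsign : ∀ y ∈ Metric.ball z D, d a * d y < 0 := by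
    intro y hy
    by_contra hcon
    have hy0 := hd y (hbU hy)
    have hpos : 0 < d a * d y := lt_of_le_of_ne (not_lt.1 hcon) (mul_ne_zero hda hy0).symm
    have hpre : IsPreconnected (Metric.ball z D) := (convex_ball z D).isPreconnected
    have hzb : z ∈ Metric.ball z D := Metric.mem_ball_self hD0
    have hprod : d y * d z < 0 := by
      by_contra h
      nlinarith [mul_self_pos.2 hda, mul_neg_of_pos_of_neg hpos hzd, mul_nonneg (mul_self_pos.2 hda).le (not_lt.1 h)]
    rcases mul_neg_iff.1 hprod with ⟨h1, h2⟩ | ⟨h1, h2⟩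
    · exact eu_const U _ d hpre hbU (fun w hw => hd w (hbU hw)) hbC y z hy hzb h1 h2
    · exact eu_const U _ d hpre hbU (fun w hw => hd w (hbU hw)) hbC z y hzb hy h2 h1
  -- blow up at x
  obtain ⟨k, hk0, hk⟩ : ∃ k > 0, ∀ v, k * ‖v‖ ≤ ‖g' x v‖ := by
    let e := (g' x).toContinuousLinearEquivOfDetNeZero (hd x hxU)
    have he : ∀ v, e v = g' x v := fun v => rfl
    refine ⟨(‖(e.symm : Eu n →L[ℝ] Eu n)‖ + 1)⁻¹, by positivity, fun v => ?_⟩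
    rw [inv_mul_le_iff₀ (by positivity), ← he]
    have := (e.symm : Eu n →L[ℝ] Eu n).le_opNorm (e v)
    simp only [ContinuousLinearEquiv.coe_coe, ContinuousLinearEquiv.symm_apply_apply] at this
    nlinarith [norm_nonneg (e v)]
  obtain ⟨δ, hδ, hδb⟩ := Metric.eventually_nhds_iff.1 ((hg x hxU).isLittleO.bound (show 0 < k / 48 by positivity))
  obtain ⟨t, ht0, ht1, htδ⟩ : ∃ t : ℝ, 0 < t ∧ t < 1 ∧ 2 * t * D < δ := by
    refine ⟨min (1/2) (δ / (4 * D)), by positivity, (min_le_left _ _).trans_lt (by norm_num), ?_⟩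
    have h1 := min_le_right (1/2) (δ / (4 * D))
    have h2 : δ / (4 * D) * (2 * D) = δ / 2 := by field_simp; norm_num
    nlinarith [mul_le_mul_of_nonneg_right h1 (show 0 ≤ 2 * D by positivity)]
  set w := x + t • (z - x) with hw
  have hwx : ‖w - x‖ = t * D := by
    rw [hw, add_sub_cancel_left, norm_smul, Real.norm_of_nonneg ht0.le, ← dist_eq_norm, dist_comm]
  have hwz : dist w z = (1 - t) * D := by
    have : w - z = (1 - t) • (x - z) := by rw [hw]; module
    rw [dist_eq_norm, this, norm_smul, Real.norm_of_nonneg (by linarith), ← dist_eq_norm]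
  have htD : 0 < t * D := by positivity
  have hKb : Metric.closedBall w (t * D / 2) ⊆ Metric.ball z D := by
    intro y hy
    rw [Metric.mem_closedBall] at hy
    rw [Metric.mem_ball]
    have := dist_triangle y w z
    nlinarith
  refine eu_degree (fun y => g y - g w) (fun y => g' x (y - w)) w (t * D / 2) (by positivity) (d a)
    ?_ ?_ ?_ ?_ ?_ ⟨w, Metric.mem_ball_self (by positivity), by simp⟩
  · exact fun y hy => (hcont y (hbU (hKb hy))).sub continuousAt_const
  · exact fun y hy => by fun_prop
  · intro y hy _
    exact ⟨g' y, (hg y (hbU (hKb hy))).sub_const _, hsign y (hKb hy)⟩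
  · intro y hy _
    exact ⟨g' x, (g' x).hasFDerivAt.comp y ((hasFDerivAt_id y).sub_const w), hxd⟩
  · intro y hy
    have hy : dist y w = t * D / 2 := hy
    rw [dist_eq_norm] at hy
    have h1 := hk (y - w)
    rw [hy] at h1
    have hkt : 0 < k * (t * D) := by positivity
    refine ⟨fun h => ?_, ?_⟩
    · have h : g' x (y - w) = 0 := h
      rw [h, norm_zero] at h1
      linarith
    · have hyx : ‖y - x‖ ≤ 3 / 2 * (t * D) := by
        have := norm_sub_le_norm_sub_add_norm_sub y w x
        linarith
      have e1 := hδb (y := y) (by rw [dist_eq_norm]; nlinarith)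
      have e2 := hδb (y := w) (by rw [dist_eq_norm]; nlinarith)
      have e3 : g y - g w - g' x (y - w) =
          (g y - g x - g' x (y - x)) - (g w - g x - g' x (w - x)) := by
        simp only [map_sub]; abel
      show ‖g y - g w - g' x (y - w)‖ ≤ 1/8 * ‖g' x (y - w)‖
      rw [e3]
      refine (norm_sub_le _ _).trans ?_
      rw [hwx] at e2
      have e4 := mul_le_mul_of_nonneg_left hyx hk0.le
      linarith


/-- If the characteristic-type polynomials at `x₀, x₁` factor as
`q₀(λ)·(α−λ)^{n₀}` with `n₀` odd and `q₁(λ)·(α−λ)^{n₁}` with `n₁` even, and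
`q₀(α)·q₁(α) < 0`, then for all `λ` slightly to the left of `α` some `x₂ ∈ U`
satisfies `det (f' x₂ − λ·id) = 0`. -/
theorem darboux_eigenvalue_left
    {n : ℕ} {U : Set (EuclideanSpace ℝ (Fin n))} (hU : IsOpen U) (hUconn : IsConnected U)
    (f : EuclideanSpace ℝ (Fin n) → EuclideanSpace ℝ (Fin n))
    (f' : EuclideanSpace ℝ (Fin n) → EuclideanSpace ℝ (Fin n) →L[ℝ] EuclideanSpace ℝ (Fin n))
    (hf : ∀ x ∈ U, HasFDerivAt f (f' x) x)
    (x₀ x₁ : EuclideanSpace ℝ (Fin n)) (hx₀ : x₀ ∈ U) (hx₁ : x₁ ∈ U)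
    (α : ℝ) (n₀ n₁ : ℕ) (hn₀ : Odd n₀) (hn₁ : Even n₁)
    (q₀ q₁ : Polynomial ℝ)
    (hq₀ : ∀ l : ℝ,
      (f' x₀ - l • ContinuousLinearMap.id ℝ (EuclideanSpace ℝ (Fin n))).det
        = q₀.eval l * (α - l) ^ n₀)
    (hq₁ : ∀ l : ℝ,
      (f' x₁ - l • ContinuousLinearMap.id ℝ (EuclideanSpace ℝ (Fin n))).det
        = q₁.eval l * (α - l) ^ n₁)
    (hα : q₀.eval α * q₁.eval α < 0) :
    ∃ δ > (0 : ℝ), ∀ l ∈ Set.Ioo (α - δ) α,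
      ∃ x₂ ∈ U, (f' x₂ - l • ContinuousLinearMap.id ℝ (EuclideanSpace ℝ (Fin n))).det = 0 := by
  have hc : ContinuousAt (fun l => q₀.eval l * q₁.eval l) α := by fun_prop
  obtain ⟨δ, hδ, hb⟩ := Metric.eventually_nhds_iff.1 (hc.eventually_lt continuousAt_const hα)
  refine ⟨δ, hδ, fun l hl => ?_⟩
  have h1 := hb (y := l) (by rw [Real.dist_eq, abs_lt]; constructor <;> linarith [hl.1, hl.2])
  have h2 : 0 < α - l := sub_pos.2 hl.2
  by_contra hcon
  push Not at hcon
  have hprod : (f' x₀ - l • ContinuousLinearMap.id ℝ (Eu n)).det *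
      (f' x₁ - l • ContinuousLinearMap.id ℝ (Eu n)).det < 0 := by
    rw [hq₀, hq₁]
    have h3 : 0 < (α - l) ^ n₀ * (α - l) ^ n₁ := by positivity
    have := mul_neg_of_neg_of_pos h1 h3
    linarith
  have hg : ∀ x ∈ U, HasFDerivAt (fun y => f y - l • y)
      (f' x - l • ContinuousLinearMap.id ℝ (Eu n)) x :=
    fun x hx => (hf x hx).sub ((hasFDerivAt_id x).const_smul l)
  rcases mul_neg_iff.1 hprod with ⟨ha, hb⟩ | ⟨ha, hb⟩
  · exact eu_darboux U hU hUconn.isPreconnected _ _ hg hcon x₀ x₁ hx₀ hx₁ ha hb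
  · exact eu_darboux U hU hUconn.isPreconnected _ _ hg hcon x₁ x₀ hx₁ hx₀ hb ha
end

section
/- Let U be an open subset of ℝⁿ and let f : U → ℝⁿ be differentiable without critical points, i.e. at every x ∈ U there is a continuous linear map f′(x) : ℝⁿ → ℝⁿ with HasFDerivAt f (f′(x)) x, and f′(x) is bijective. Then f is an open map: for every open set A ⊆ U, the image f(A) is open in ℝⁿ. -/
/-- A map on an open set `U ⊆ ℝⁿ` which is differentiable without critical points
(derivative exists and is bijective at every point, no `C¹` assumption) is open. -/
theorem differentiable_no_critical_points_isOpenMap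
    {n : ℕ} {U : Set (EuclideanSpace ℝ (Fin n))} (hU : IsOpen U)
    (f : EuclideanSpace ℝ (Fin n) → EuclideanSpace ℝ (Fin n))
    (hdiff : ∀ x ∈ U,
      ∃ D : EuclideanSpace ℝ (Fin n) →L[ℝ] EuclideanSpace ℝ (Fin n),
        HasFDerivAt f D x ∧ Function.Bijective D) :
    ∀ A : Set (EuclideanSpace ℝ (Fin n)), A ⊆ U → IsOpen A → IsOpen (f '' A) := by
  intro A hAU hA
  rw [isOpen_iff_mem_nhds]
  rintro _ ⟨a, ha, rfl⟩
  obtain ⟨D, hD, hDb⟩ := hdiff a (hAU ha)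
  have hanti : ∃ C, AntilipschitzWith C D := by
    obtain ⟨K, _, hK⟩ := (D : EuclideanSpace ℝ (Fin n) →ₗ[ℝ] EuclideanSpace ℝ (Fin n)).exists_antilipschitzWith
      (LinearMap.ker_eq_bot.2 hDb.1)
    exact ⟨K, hK⟩
  have hne := hD.eventually_ne (c := f a) hanti
  rw [eventually_nhdsWithin_iff] at hne
  obtain ⟨r, hr, hball⟩ := Metric.nhds_basis_closedBall.eventually_iff.1
    (hne.and (hA.mem_nhds ha))
  have hsub : Metric.closedBall a r ⊆ A := fun x hx => (hball hx).2
  have hcont : ContinuousOn f (Metric.closedBall a r) := fun x hx => by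
    obtain ⟨D', h', _⟩ := hdiff x (hAU (hsub hx))
    exact h'.continuousAt.continuousWithinAt
  have hcl : IsClosed (f '' Metric.sphere a r) :=
    ((isCompact_sphere a r).image_of_continuousOn
      (hcont.mono Metric.sphere_subset_closedBall)).isClosed
  have hnot : f a ∈ (f '' Metric.sphere a r)ᶜ := by
    rintro ⟨x, hx, hxa⟩
    have hxne : x ≠ a := by
      rintro rfl
      simp at hx
      exact hr.ne hx
    exact (hball (Metric.sphere_subset_closedBall hx)).1 hxne hxa
  obtain ⟨δ, hδ, hδb⟩ := Metric.isOpen_iff.1 hcl.isOpen_compl _ hnot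
  refine Metric.mem_nhds_iff.2 ⟨δ / 2, by positivity, fun y hy => ?_⟩
  rw [Metric.mem_ball] at hy
  obtain ⟨x, hx, hmin⟩ := (isCompact_closedBall a r).exists_isMinOn
    ⟨a, Metric.mem_closedBall_self hr.le⟩
    (f := fun x => ‖f x - y‖ ^ 2) ((hcont.sub continuousOn_const).norm.pow 2)
  have hle : ‖f x - y‖ ≤ ‖f a - y‖ := by
    have : ‖f x - y‖ ^ 2 ≤ ‖f a - y‖ ^ 2 := hmin (Metric.mem_closedBall_self hr.le)
    exact le_of_sq_le_sq this (norm_nonneg _)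
  have hxs : x ∈ Metric.ball a r := by
    rw [Metric.mem_ball]
    refine lt_of_le_of_ne hx fun h => ?_
    refine (hδb (a := f x) ?_) ⟨x, h, rfl⟩
    rw [Metric.mem_ball]
    rw [← dist_eq_norm, ← dist_eq_norm] at hle
    rw [dist_comm y] at hy
    linarith [dist_triangle (f x) y (f a), dist_comm y (f a)]
  have hloc : IsLocalMin (fun x => ‖f x - y‖ ^ 2) x :=
    hmin.isLocalMin (Metric.closedBall_mem_nhds_of_mem hxs)
  obtain ⟨D', h', hb'⟩ := hdiff x (hAU (hsub hx))
  have hz := hloc.hasFDerivAt_eq_zero (h'.sub_const y).norm_sq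
  obtain ⟨v, hv⟩ := hb'.2 (f x - y)
  have hz' := congrArg (fun L => L v) hz
  simp [hv, -map_sub] at hz'
  exact ⟨x, hsub hx, sub_eq_zero.1 hz'⟩
end

section
/- Let X be a locally path-connected Hausdorff topological space, let U be an open subset of ℝⁿ, and let f : X × U → ℝⁿ be continuous. Suppose that for every x ∈ X the map f_x : U → ℝⁿ defined by f_x(y) = f(x,y) is differentiable (not necessarily C¹) and without critical points, i.e. at every y ∈ U it has a Fréchet derivative that is a bijective linear map ℝⁿ → ℝⁿ. Fix (x₀, y₀) ∈ X × U and set z₀ = f(x₀, y₀). Then there exist a neighborhood V of x₀ in X and a compact set K ⊆ U that is a neighborhood of y₀, such that for every x ∈ V there is exactly one y ∈ K with f(x, y) = z₀. -/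
open Set Filter Topology Metric MeasureTheory

section brouwer
variable {E : Type*} [NormedAddCommGroup E] [InnerProductSpace ℝ E] [FiniteDimensional ℝ E]

lemma det_interp_s10 (m : ℕ) (hm : m = Module.finrank ℝ E) (v : ℕ → ℝ) (hv : Function.Injective v) (A : E →L[ℝ] E) (t : ℝ) :
    (ContinuousLinearMap.id ℝ E + t • A).det =
      ∑ i ∈ Finset.range (m + 1), (ContinuousLinearMap.id ℝ E + (v i) • A).det *
        (Lagrange.basis (Finset.range (m + 1)) v i).eval t := by
  classical
  let b := Module.finBasis ℝ E
  let M := LinearMap.toMatrix b b (A : E →ₗ[ℝ] E)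
  let p : Polynomial ℝ := Matrix.det ((Polynomial.X : Polynomial ℝ) • M.map Polynomial.C +
    (1 : Matrix (Fin (Module.finrank ℝ E)) _ ℝ).map Polynomial.C)
  have hp : ∀ s : ℝ, p.eval s = (ContinuousLinearMap.id ℝ E + s • A).det := by
    intro s
    have h1 : (ContinuousLinearMap.id ℝ E + s • A).det = Matrix.det (1 + s • M) := by
      rw [ContinuousLinearMap.det, ← LinearMap.det_toMatrix b]
      congr 1
      simp [M]
    rw [h1]
    change Polynomial.evalRingHom s p = _
    rw [RingHom.map_det]
    congr 1
    ext i j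
    simp [Matrix.one_apply, add_comm]
    split_ifs <;> simp [mul_comm]
  have hdeg : p.degree < (Finset.range (m + 1)).card := by
    have h := Polynomial.natDegree_det_X_add_C_le M 1
    rw [Finset.card_range]
    refine lt_of_le_of_lt Polynomial.degree_le_natDegree ?_
    rw [Fintype.card_fin] at h
    have : p.natDegree < m + 1 := by rw [hm]; exact Nat.lt_succ_of_le h
    exact_mod_cast this
  have key := Lagrange.eq_interpolate (s := Finset.range (m+1)) (v := v) hv.injOn hdeg
  have := congrArg (Polynomial.eval t) key
  rw [hp, Lagrange.interpolate_apply, Polynomial.eval_finsetSum] at this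
  rw [this]
  simp [hp]

lemma det_ne_zero_small (A : E →L[ℝ] E) (t : ℝ) (ht : 0 ≤ t) (h : t * ‖A‖ < 1) :
    (ContinuousLinearMap.id ℝ E + t • A).det ≠ 0 := by
  intro h0
  have := LinearMap.bot_lt_ker_of_det_eq_zero h0
  obtain ⟨v, hv, hv0⟩ := Submodule.exists_mem_ne_zero_of_ne_bot this.ne'
  have h1 : v + t • A v = 0 := by simpa using hv
  have h2 : ‖v‖ = t * ‖A v‖ := by
    conv_lhs => rw [eq_neg_of_add_eq_zero_left h1, norm_neg, norm_smul, Real.norm_of_nonneg ht]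
  have h3 := A.le_opNorm v
  have h4 : 0 < ‖v‖ := norm_pos_iff.2 hv0
  nlinarith [mul_le_mul_of_nonneg_left h3 ht]

lemma det_pos_small (A : E →L[ℝ] E) (t : ℝ) (ht : 0 ≤ t) (h : t * ‖A‖ < 1) :
    0 < (ContinuousLinearMap.id ℝ E + t • A).det := by
  by_contra hneg
  push Not at hneg
  have hc : ContinuousOn (fun s : ℝ => (ContinuousLinearMap.id ℝ E + s • A).det) (Icc 0 t) := by
    apply Continuous.continuousOn
    exact ContinuousLinearMap.continuous_det.comp (by fun_prop)
  have := intermediate_value_Icc' ht hc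
  have h1 : (ContinuousLinearMap.id ℝ E + (0:ℝ) • A).det = 1 := by simp [ContinuousLinearMap.det]
  obtain ⟨s, hs, hs0⟩ := this ⟨hneg, by simp only [h1]; norm_num⟩
  refine det_ne_zero_small A s hs.1 ?_ hs0
  exact lt_of_le_of_lt (mul_le_mul_of_nonneg_right hs.2 (norm_nonneg _)) h

lemma det_zero_of_norm_const (f : E → E) (x : E) (R : ℝ) (hR : 0 < R) (D : E →L[ℝ] E)
    (hf : HasFDerivAt f D x) (hn : ∀ y, ‖f y‖ = R) : D.det = 0 := by
  by_contra h
  have h1 : HasFDerivAt (fun y => inner ℝ (f y) (f y)) _ x := hf.inner ℝ hf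
  have h2 : (fun y => inner ℝ (f y) (f y)) = fun _ => R ^ 2 := by
    ext y; rw [real_inner_self_eq_norm_sq, hn]
  rw [h2] at h1
  have h3 := h1.unique (hasFDerivAt_const (R^2) x)
  have hs : Function.Surjective D := (LinearMap.equivOfDetNeZero (D : E →ₗ[ℝ] E) h).surjective
  obtain ⟨v, hv⟩ := hs (f x)
  have h4 := DFunLike.congr_fun h3 v
  simp [hv] at h4
  have := hn x
  simp [h4] at this
  linarith

variable [MeasurableSpace E] [BorelSpace E]

lemma no_retraction (R : ℝ) (hR : 0 < R) (f : E → E) (hf : ContDiff ℝ 1 f)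
    (hn : ∀ x, ‖f x‖ = R) (hs : ∀ x, ‖x‖ = R → f x = x) : False := by
  let μ : Measure E := volume
  let A : E → E →L[ℝ] E := fun x => fderiv ℝ f x - ContinuousLinearMap.id ℝ E
  have hA : Continuous A := (hf.continuous_fderiv (by norm_num)).sub continuous_const
  have hfd : ∀ x, HasFDerivAt f (fderiv ℝ f x) x := fun x =>
    (hf.differentiable (by norm_num) x).hasFDerivAt
  have hg : ∀ x, HasFDerivAt (fun y => f y - y) (A x) x := fun x => (hfd x).sub (hasFDerivAt_id x)
  obtain ⟨C, hC⟩ := (isCompact_closedBall (0:E) R).exists_bound_of_continuousOn hA.continuousOn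
  have hC0 : 0 ≤ C := (norm_nonneg _).trans (hC 0 (by simp [hR.le]))
  have hlip : ∀ x ∈ closedBall (0:E) R, ∀ y ∈ closedBall (0:E) R,
      ‖(f y - y) - (f x - x)‖ ≤ C * ‖y - x‖ := fun x hx y hy =>
    (convex_closedBall (0:E) R).norm_image_sub_le_of_norm_hasFDerivWithin_le
      (fun z _ => (hg z).hasFDerivWithinAt) hC hx hy
  have main : ∀ t : ℝ, 0 < t → t < 1 → t * C < 1 →
      ∫ x in ball (0:E) R, (ContinuousLinearMap.id ℝ E + t • A x).det ∂μ = μ.real (ball 0 R) := by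
    intro t ht0 ht1 htC
    let F : E → E := fun x => x + t • (f x - x)
    have hF : ∀ x, HasFDerivAt F (ContinuousLinearMap.id ℝ E + t • A x) x := fun x =>
      (hasFDerivAt_id x).add ((hg x).const_smul t)
    have hFc : ContDiff ℝ 1 F := by fun_prop
    have htA : ∀ x ∈ closedBall (0:E) R, t * ‖A x‖ < 1 := fun x hx =>
      (mul_le_mul_of_nonneg_left (hC x hx) ht0.le).trans_lt htC
    have hinj : InjOn F (closedBall 0 R) := by
      intro x hx y hy hxy
      have h1 : y - x = - (t • ((f y - y) - (f x - x))) := by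
        simp only [F] at hxy
        rw [smul_sub, eq_neg_iff_add_eq_zero]
        have : (y + t • (f y - y)) - (x + t • (f x - x)) = 0 := by rw [hxy]; simp
        rw [← this]; abel
      have h2 : ‖y - x‖ = t * ‖(f y - y) - (f x - x)‖ := by
        conv_lhs => rw [h1]
        rw [norm_neg, norm_smul, Real.norm_of_nonneg ht0.le]
      have h3 := mul_le_mul_of_nonneg_left (hlip x hx y hy) ht0.le
      have h4 : ‖y - x‖ ≤ 0 := by
        by_contra hh
        push Not at hh
        nlinarith
      have := norm_le_zero_iff.1 h4
      exact (sub_eq_zero.1 this).symm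
    have hFn : ∀ x ∈ ball (0:E) R, F x ∈ ball (0:E) R := by
      intro x hx
      have hx' : ‖x‖ < R := by simpa using hx
      have h1 : F x = (1 - t) • x + t • f x := by simp only [F]; rw [sub_smul, smul_sub, one_smul]; abel
      rw [mem_ball_zero_iff, h1]
      refine (norm_add_le _ _).trans_lt ?_
      rw [norm_smul, norm_smul, hn, Real.norm_of_nonneg ht0.le, Real.norm_of_nonneg (by linarith)]
      nlinarith
    have hFs : ∀ x, ‖x‖ = R → F x = x := by
      intro x hx; simp [F, hs x hx]
    have himg : F '' ball 0 R = ball 0 R := by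
      apply Subset.antisymm
      · rintro _ ⟨x, hx, rfl⟩; exact hFn x hx
      have hopen : IsOpen (F '' ball 0 R) := by
        rw [isOpen_iff_mem_nhds]
        rintro _ ⟨x, hx, rfl⟩
        have hst : HasStrictFDerivAt F (ContinuousLinearMap.id ℝ E + t • A x) x :=
          (hFc.contDiffAt).hasStrictFDerivAt' (hF x) (by norm_num)
        have hd := det_ne_zero_small (A x) t ht0.le (htA x (ball_subset_closedBall hx))
        have hsur : (ContinuousLinearMap.id ℝ E + t • A x).range = ⊤ :=
          LinearMap.range_eq_top.2 (LinearMap.equivOfDetNeZero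
            ((ContinuousLinearMap.id ℝ E + t • A x : E →L[ℝ] E) : E →ₗ[ℝ] E) hd).surjective
        rw [← hst.map_nhds_eq_of_surj hsur]
        exact image_mem_map (isOpen_ball.mem_nhds hx)
      have hclosed : IsClosed (F '' closedBall 0 R) :=
        ((isCompact_closedBall (0:E) R).image hFc.continuous).isClosed
      have hsub : ball (0:E) R ∩ F '' closedBall 0 R ⊆ F '' ball 0 R := by
        rintro _ ⟨hy, x, hx, rfl⟩
        rcases (mem_closedBall_zero_iff.1 hx).lt_or_eq with h | h
        · exact ⟨x, by simpa using h, rfl⟩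
        · rw [hFs x h] at hy
          exact absurd (mem_ball_zero_iff.1 hy) (by linarith)
      have hpre : IsPreconnected (ball (0:E) R) := (convex_ball (0:E) R).isPreconnected
      refine hpre.subset_of_closure_inter_subset hopen ⟨F 0, hFn 0 (by simp [hR]), 0, by simp [hR], rfl⟩ ?_
      rintro y ⟨hy1, hy2⟩
      apply hsub
      refine ⟨hy2, ?_⟩
      have : closure (F '' ball 0 R) ⊆ F '' closedBall 0 R :=
        closure_minimal (image_mono ball_subset_closedBall) hclosed
      exact this hy1
    have hch := integral_image_eq_integral_abs_det_fderiv_smul μ (measurableSet_ball (x := (0:E)) (ε := R))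
      (fun x _ => (hF x).hasFDerivWithinAt) (hinj.mono ball_subset_closedBall) (fun _ => (1:ℝ))
    rw [himg] at hch
    simp only [smul_eq_mul, mul_one, integral_const, measureReal_restrict_apply_univ] at hch
    rw [hch]
    refine setIntegral_congr_fun measurableSet_ball fun x hx => ?_
    exact (abs_of_pos (det_pos_small (A x) t ht0.le (htA x (ball_subset_closedBall hx)))).symm
  set m := Module.finrank ℝ E
  let v : ℕ → ℝ := fun i => 1 / ((C + 2) + i)
  have hvden : ∀ i : ℕ, (0:ℝ) < (C + 2) + i := fun i => by positivity
  have hv : Function.Injective v := by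
    intro i j hij
    simp only [v] at hij
    rw [one_div, one_div] at hij
    have := inv_injective hij
    exact_mod_cast add_left_cancel this
  have hvm : ∀ i, ∫ x in ball (0:E) R, (ContinuousLinearMap.id ℝ E + v i • A x).det ∂μ = μ.real (ball 0 R) := by
    intro i
    have hi : (0:ℝ) ≤ i := by positivity
    refine main (v i) (by have := hvden i; positivity) ?_ ?_
    · simp only [v]; rw [div_lt_one (hvden i)]; linarith
    · simp only [v]; rw [div_mul_eq_mul_div, div_lt_one (hvden i)]; linarith
  have h1 : ∫ x in ball (0:E) R, (ContinuousLinearMap.id ℝ E + (1:ℝ) • A x).det ∂μ = 0 := by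
    have : ∀ x, (ContinuousLinearMap.id ℝ E + (1:ℝ) • A x).det = 0 := by
      intro x
      have : ContinuousLinearMap.id ℝ E + (1:ℝ) • A x = fderiv ℝ f x := by simp [A]
      rw [this]
      exact det_zero_of_norm_const f x R hR _ (hfd x) hn
    simp only [this, integral_zero]
  have hint : ∀ t : ℝ, IntegrableOn (fun x => (ContinuousLinearMap.id ℝ E + t • A x).det) (ball (0:E) R) μ := by
    intro t
    have hc : Continuous (fun x => (ContinuousLinearMap.id ℝ E + t • A x).det) :=
      ContinuousLinearMap.continuous_det.comp (by fun_prop)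
    exact (hc.continuousOn.integrableOn_compact (isCompact_closedBall (0:E) R)).mono_set ball_subset_closedBall
  simp_rw [det_interp_s10 m rfl v hv _ 1] at h1
  rw [integral_finsetSum _ (fun i _ => (hint (v i)).mul_const _)] at h1
  simp_rw [integral_mul_const, hvm, ← Finset.mul_sum] at h1
  have h2 := Lagrange.sum_basis (s := Finset.range (m+1)) (v := v) hv.injOn ⟨0, by simp⟩
  have h3 := congrArg (Polynomial.eval (1:ℝ)) h2
  rw [Polynomial.eval_finsetSum, Polynomial.eval_one] at h3
  rw [h3, mul_one] at h1
  have hpos : 0 < μ.real (ball (0:E) R) := by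
    rw [Measure.real, ENNReal.toReal_pos_iff]
    exact ⟨measure_ball_pos μ 0 hR, measure_ball_lt_top⟩
  linarith

open scoped Manifold in
/-- A nonvanishing continuous self-map cannot be the identity far away. -/
lemma no_nonvanishing (R : ℝ) (hR : 0 < R) (k : E → E) (hk : Continuous k)
    (hk0 : ∀ x, R ≤ ‖x‖ → k x = 0) (hne : ∀ x, x + k x ≠ 0) : False := by
  classical
  let t : E → Set E := fun x => if ‖x‖ < 2 * R then ball (k x) ‖x + k x‖ else {0}
  have ht : ∀ x, Convex ℝ (t x) := by
    intro x; simp only [t]; split_ifs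
    · exact convex_ball _ _
    · exact convex_singleton _
  have hloc : ∀ x : E, ∃ c : E, ∀ᶠ y in 𝓝 x, c ∈ t y := by
    intro x
    by_cases hx : ‖x‖ < 2 * R
    · refine ⟨k x, ?_⟩
      have h1 : ∀ᶠ y in 𝓝 x, ‖y‖ < 2 * R := continuous_norm.continuousAt.eventually_lt_const hx
      have h2 : ∀ᶠ y in 𝓝 x, dist (k x) (k y) < ‖y + k y‖ := by
        have hc1 : ContinuousAt (fun y => dist (k x) (k y)) x := by fun_prop
        have hc2 : ContinuousAt (fun y => ‖y + k y‖) x := by fun_prop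
        refine hc1.eventually_lt hc2 ?_
        simpa using hne x
      filter_upwards [h1, h2] with y hy1 hy2
      simp only [t, hy1, if_true]
      exact hy2
    · refine ⟨0, ?_⟩
      push Not at hx
      have h1 : ∀ᶠ y in 𝓝 x, R < ‖y‖ := continuous_norm.continuousAt.eventually_const_lt (by linarith)
      filter_upwards [h1] with y hy
      simp only [t]
      split_ifs
      · rw [hk0 y hy.le]; simp; intro h; rw [h] at hy; simp at hy; linarith
      · rfl
  obtain ⟨g, hg⟩ := exists_contMDiffMap_forall_mem_convex_of_local_const (n := 1) 𝓘(ℝ, E) ht hloc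
  have hgc : ContDiff ℝ 1 g := g.contMDiff.contDiff
  have hgne : ∀ x, x + g x ≠ 0 := by
    intro x h0
    have hx := hg x
    simp only [t] at hx
    split_ifs at hx with h
    · rw [mem_ball, dist_eq_norm, eq_neg_of_add_eq_zero_right h0, ← norm_neg] at hx
      simp at hx
      rw [add_comm] at hx
      exact lt_irrefl _ hx
    · simp at hx
      rw [hx, add_zero] at h0
      rw [h0] at h; simp [hR] at h
  have hHc : ContDiff ℝ 1 (fun x => x + g x) := contDiff_id.add hgc
  have hnc : ContDiff ℝ 1 (fun x => ‖x + g x‖⁻¹) :=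
    (hHc.norm ℝ hgne).inv (fun x => norm_ne_zero_iff.2 (hgne x))
  refine no_retraction (2 * R) (by linarith) (fun x => (2 * R * ‖x + g x‖⁻¹) • (x + g x))
    ((contDiff_const.mul hnc).smul hHc) ?_ ?_
  · intro x
    have : ‖x + g x‖ ≠ 0 := norm_ne_zero_iff.2 (hgne x)
    rw [norm_smul, Real.norm_of_nonneg (by positivity)]
    field_simp
  · intro x hx
    have h0 : g x = 0 := by
      have := hg x
      simpa [t, hx] using this
    simp only [h0, add_zero, hx]
    rw [mul_inv_cancel₀ (by linarith), one_smul]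

/-- Brouwer: a continuous map on a closed ball moving points less than the radius
hits the center. -/
lemma near_id_hits (c : E) (R : ℝ) (hR : 0 < R) (φ : E → E) (hφ : ContinuousOn φ (closedBall c R))
    (h : ∀ w ∈ closedBall c R, ‖φ w - w‖ < R) : ∃ w ∈ closedBall c R, φ w = c := by
  by_contra hno
  push Not at hno
  let ρ : E → E := fun x => (R / max R ‖x‖) • x
  have hmax : ∀ x : E, 0 < max R ‖x‖ := fun x => lt_max_of_lt_left hR
  have hρc : Continuous ρ := by
    refine (continuous_const.div (by fun_prop) fun x => (hmax x).ne').smul continuous_id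
  have hρm : ∀ x, c + ρ x ∈ closedBall c R := by
    intro x
    rw [mem_closedBall, dist_eq_norm, add_sub_cancel_left, norm_smul,
      Real.norm_of_nonneg (by have := hmax x; positivity), div_mul_eq_mul_div,
      div_le_iff₀ (hmax x)]
    exact mul_le_mul_of_nonneg_left (le_max_right _ _) hR.le
  have hρ1 : ∀ x, ‖x‖ ≤ R → ρ x = x := by
    intro x hx; simp [ρ, max_eq_left hx, div_self hR.ne']
  let χ : E → ℝ := fun x => max 0 (min 1 (2 - ‖x‖ / R))
  have hχc : Continuous χ := by fun_prop
  have hχ0 : ∀ x, 0 ≤ χ x := fun x => le_max_left _ _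
  have hχ1 : ∀ x, χ x ≤ 1 := fun x => max_le (by norm_num) (min_le_left _ _)
  let d : E → E := fun x => φ (c + ρ x) - (c + ρ x)
  have hdc : Continuous d := by
    refine Continuous.sub ?_ (by fun_prop)
    exact hφ.comp_continuous (by fun_prop) hρm
  refine no_nonvanishing (2 * R) (by linarith) (fun x => χ x • d x) (hχc.smul hdc) ?_ ?_
  · intro x hx
    have : χ x = 0 := by
      apply max_eq_left
      refine (min_le_right _ _).trans ?_
      rw [sub_nonpos, le_div_iff₀ hR]; exact hx
    simp [this]
  · intro x h0
    rcases le_total ‖x‖ R with hx | hx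
    · have h1 : χ x = 1 := by
        have : ‖x‖ / R ≤ 1 := (div_le_one hR).2 hx
        simp only [χ]
        rw [min_eq_left (by linarith)]; norm_num
      have h2 := hρ1 x hx
      simp only [d, h1, h2, one_smul] at h0
      refine hno (c + x) (h2 ▸ hρm x) ?_
      have h3 : x + (φ (c + x) - (c + x)) = φ (c + x) - c := by abel
      rw [h3] at h0
      exact sub_eq_zero.1 h0
    · have h1 : ‖x‖ = χ x * ‖d x‖ := by
        conv_lhs => rw [eq_neg_of_add_eq_zero_left h0, norm_neg, norm_smul, Real.norm_of_nonneg (hχ0 x)]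
      have h2 : ‖d x‖ < R := h _ (hρm x)
      nlinarith [hχ0 x, hχ1 x, norm_nonneg (d x)]
end brouwer

section localinj
variable {E : Type*} [NormedAddCommGroup E] [InnerProductSpace ℝ E] [FiniteDimensional ℝ E]

lemma lower_bound_at (f : E → E) (p : E) (D : E →L[ℝ] E) (hD : HasFDerivAt f D p)
    (hb : Function.Bijective D) :
    ∃ c > 0, ∃ r > 0, ∀ y, ‖y - p‖ < r → c * ‖y - p‖ ≤ ‖f y - f p‖ := by
  let L : E ≃L[ℝ] E := (LinearEquiv.ofBijective (D : E →ₗ[ℝ] E) hb).toContinuousLinearEquiv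
  have hL : ∀ v, L v = D v := fun v => rfl
  set C := ‖(L.symm : E →L[ℝ] E)‖ + 1 with hC
  have hC0 : 0 < C := by positivity
  have hCv : ∀ v, ‖v‖ ≤ C * ‖D v‖ := by
    intro v
    have h1 := (L.symm : E →L[ℝ] E).le_opNorm (D v)
    have h2 : (L.symm : E →L[ℝ] E) (D v) = v := by
      rw [← hL]; simp
    rw [h2] at h1
    nlinarith [norm_nonneg (D v)]
  have h := hD.isLittleO.def (c := 1 / (2 * C)) (by positivity)
  obtain ⟨r, hr, hr'⟩ := Metric.eventually_nhds_iff.1 h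
  refine ⟨1 / (2 * C), by positivity, r, hr, fun y hy => ?_⟩
  have h1 := hr' (by rwa [dist_eq_norm] : dist y p < r)
  have h2 := hCv (y - p)
  have h3 : ‖D (y - p)‖ ≤ ‖f y - f p‖ + ‖f y - f p - D (y - p)‖ := by
    have : D (y - p) = (f y - f p) - (f y - f p - D (y - p)) := by abel
    conv_lhs => rw [this]
    exact norm_sub_le _ _
  have h4 : 1 / C * ‖y - p‖ ≤ ‖D (y - p)‖ := by
    rw [one_div, inv_mul_le_iff₀ hC0]; exact h2
  have h5 : 1 / C = 1 / (2 * C) + 1 / (2 * C) := by field_simp; norm_num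
  rw [h5, add_mul] at h4
  linarith

variable [MeasurableSpace E] [BorelSpace E]

lemma nhds_le_map_at (f : E → E) (p : E) (D : E →L[ℝ] E) (hD : HasFDerivAt f D p)
    (hb : Function.Bijective D) (hc : ∀ᶠ y in 𝓝 p, ContinuousAt f y) :
    𝓝 (f p) ≤ map f (𝓝 p) := by
  let L : E ≃L[ℝ] E := (LinearEquiv.ofBijective (D : E →ₗ[ℝ] E) hb).toContinuousLinearEquiv
  have hL : ∀ v, L v = D v := fun v => rfl
  set C := ‖(L.symm : E →L[ℝ] E)‖ + 1 with hC
  have hC0 : 0 < C := by positivity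
  have hCv : ∀ v, ‖L.symm v‖ ≤ C * ‖v‖ := by
    intro v
    have h1 := (L.symm : E →L[ℝ] E).le_opNorm v
    have h2 : (L.symm : E →L[ℝ] E) v = L.symm v := rfl
    rw [h2] at h1
    nlinarith [norm_nonneg v]
  intro S hS
  rw [mem_map] at hS
  have h := hD.isLittleO.def (c := 1 / (2 * C)) (by positivity)
  obtain ⟨r, hr, hr'⟩ := Metric.nhds_basis_closedBall.mem_iff.1 (hc.and (h.and hS))
  rw [Metric.mem_nhds_iff]
  refine ⟨r / (2 * C), by positivity, fun z hz => ?_⟩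
  rw [mem_ball, dist_eq_norm] at hz
  have hcont : ContinuousOn (fun y => p + L.symm (f y - z)) (closedBall p r) := by
    intro y hy
    have : ContinuousAt f y := (hr' hy).1
    exact (continuousAt_const.add (L.symm.continuous.continuousAt.comp (this.sub continuousAt_const))).continuousWithinAt
  obtain ⟨y, hy, hy'⟩ := near_id_hits p r hr _ hcont (by
    intro w hw
    have h1 := (hr' hw).2.1
    have h2 : p + L.symm (f w - z) - w = L.symm ((f w - f p - D (w - p)) - (z - f p)) := by
      have h3 : w - p = L.symm (D (w - p)) := by rw [← hL]; simp
      have h4 : p + L.symm (f w - z) - w = L.symm (f w - z) - (w - p) := by abel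
      rw [h4]
      conv_lhs => rw [h3]
      rw [← map_sub]
      congr 1
      abel
    rw [h2]
    have h5 : ‖w - p‖ ≤ r := by rwa [mem_closedBall, dist_eq_norm] at hw
    calc _ ≤ C * ‖(f w - f p - D (w - p)) - (z - f p)‖ := hCv _
      _ ≤ C * (‖f w - f p - D (w - p)‖ + ‖z - f p‖) := by gcongr; exact norm_sub_le _ _
      _ < C * (1 / (2 * C) * r + r / (2 * C)) := by
          refine mul_lt_mul_of_pos_left (add_lt_add_of_le_of_lt (h1.trans ?_) hz) hC0
          exact mul_le_mul_of_nonneg_left h5 (by positivity)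
      _ = r := by field_simp; norm_num)
  have h6 : f y = z := by
    have : L.symm (f y - z) = 0 := by simpa using hy'
    have := (map_eq_zero_iff L.symm L.symm.injective).1 this
    exact sub_eq_zero.1 this
  rw [← h6]
  exact (hr' hy).2.2

def GoodOn (f : E → E) (U : Set E) : Prop :=
  ∀ y ∈ U, ∃ D : E →L[ℝ] E, HasFDerivAt f D y ∧ Function.Bijective D

lemma GoodOn.nhds_le {f : E → E} {U : Set E} (hU : IsOpen U) (hf : GoodOn f U) {p : E} (hp : p ∈ U) :
    𝓝 (f p) ≤ map f (𝓝 p) := by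
  obtain ⟨D, hD, hb⟩ := hf p hp
  refine nhds_le_map_at f p D hD hb ?_
  filter_upwards [hU.mem_nhds hp] with y hy
  obtain ⟨D, hD, hb⟩ := hf y hy
  exact hD.continuousAt

lemma GoodOn.continuousOn {f : E → E} {U : Set E} (hf : GoodOn f U) : ContinuousOn f U := by
  intro y hy
  obtain ⟨D, hD, hb⟩ := hf y hy
  exact hD.continuousAt.continuousWithinAt

lemma two_sheets {f : E → E} {U : Set E} (hU : IsOpen U) (hf : GoodOn f U) {K : Set E}
    (hK : IsCompact K) (hKU : K ⊆ U) (c : E) (R : ℝ)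
    (hloc : ∀ y ∈ K, f y ∈ ball c R → K ∈ 𝓝 y ∧ ∃ W ∈ 𝓝 y, InjOn f W)
    (y₁ y₂ : E) (h₁ : y₁ ∈ K) (h₂ : y₂ ∈ K) (h12 : f y₁ = f y₂) (hb : f y₁ ∈ ball c R) :
    ∃ s₁ s₂ : E → E, ContinuousOn s₁ (ball c R) ∧ ContinuousOn s₂ (ball c R) ∧
      (∀ u ∈ ball c R, s₁ u ∈ K ∧ f (s₁ u) = u) ∧
      (∀ u ∈ ball c R, s₂ u ∈ K ∧ f (s₂ u) = u) ∧
      (∀ u ∈ ball c R, s₁ u = s₂ u → y₁ = y₂) := by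
  classical
  have : CompactSpace K := isCompact_iff_compactSpace.1 hK
  let g : K → E := fun y => f y
  have hg : Continuous g := (hf.continuousOn.mono hKU).domRestrict
  have hlh : IsLocalHomeomorphOn g (g ⁻¹' ball c R) := by
    rw [isLocalHomeomorphOn_iff_isOpenEmbedding_restrict]
    rintro ⟨y, hy⟩ hyb
    obtain ⟨hKn, W, hW, hinj⟩ := hloc y hy hyb
    let O := interior K ∩ interior W
    have hO : IsOpen O := isOpen_interior.inter isOpen_interior
    have hyO : y ∈ O := ⟨mem_interior_iff_mem_nhds.2 hKn, mem_interior_iff_mem_nhds.2 hW⟩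
    let V : Set K := Subtype.val ⁻¹' O
    have hV : IsOpen V := hO.preimage continuous_subtype_val
    refine ⟨V, hV.mem_nhds hyO, ?_⟩
    rw [isOpenEmbedding_iff_continuous_injective_isOpenMap]
    refine ⟨hg.comp continuous_subtype_val, ?_, ?_⟩
    · rintro ⟨a, ha⟩ ⟨b, hb⟩ hab
      have : (a : E) = b := hinj (interior_subset ha.2) (interior_subset hb.2) hab
      exact Subtype.ext (Subtype.ext this)
    · apply IsOpenMap.of_nhds_le
      rintro ⟨⟨a, haK⟩, ha⟩
      have e1 : map (Subtype.val : V → K) (𝓝 ⟨⟨a, haK⟩, ha⟩) = 𝓝 ⟨a, haK⟩ :=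
        map_nhds_subtype_coe_eq_nhds ha (hV.mem_nhds ha)
      have e2 : map (Subtype.val : K → E) (𝓝 ⟨a, haK⟩) = 𝓝 a :=
        map_nhds_subtype_coe_eq_nhds haK (mem_interior_iff_mem_nhds.1 ha.1)
      have e3 : map (V.domRestrict g) (𝓝 ⟨⟨a, haK⟩, ha⟩) = map f (𝓝 a) := by
        rw [← e2, ← e1, map_map, map_map]; rfl
      rw [e3]
      exact hf.nhds_le hU (hKU haK)
  have hcov : IsCoveringMapOn g (ball c R) := IsCoveringMapOn.of_isLocalHomeomorphOn hg hlh
  let A := ball c R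
  have : ContractibleSpace A := (convex_ball c R).contractibleSpace ⟨_, hb⟩
  have : LocallyPathConnectedSpace A := isOpen_ball.locallyPathConnectedSpace
  let ι : C(A, E) := ⟨Subtype.val, continuous_subtype_val⟩
  have hb2 : f y₂ ∈ ball c R := h12 ▸ hb
  obtain ⟨F₁, ⟨hF₁, hF₁'⟩, -⟩ := hcov.existsUnique_continuousMap_lifts ι (a₀ := ⟨f y₁, hb⟩)
    (e₀ := ⟨y₁, h₁⟩) rfl (fun a => a.2)
  obtain ⟨F₂, ⟨hF₂, hF₂'⟩, -⟩ := hcov.existsUnique_continuousMap_lifts ι (a₀ := ⟨f y₁, hb⟩)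
    (e₀ := ⟨y₂, h₂⟩) h12.symm (fun a => a.2)
  let ext : C(A, K) → E → E := fun F u => if hu : u ∈ ball c R then (F ⟨u, hu⟩ : E) else 0
  have hext : ∀ F : C(A, K), ∀ u (hu : u ∈ ball c R), ext F u = F ⟨u, hu⟩ := by
    intro F u hu; simp only [ext, hu, dif_pos]
  have hec : ∀ F : C(A, K), ContinuousOn (ext F) (ball c R) := by
    intro F
    rw [continuousOn_iff_continuous_domRestrict]
    have : (ball c R).domRestrict (ext F) = fun u : A => (F u : E) := by
      funext u; exact hext F u u.2
    rw [this]
    fun_prop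
  refine ⟨ext F₁, ext F₂, hec F₁, hec F₂, ?_, ?_, ?_⟩
  · intro u hu
    rw [hext F₁ u hu]
    exact ⟨(F₁ ⟨u, hu⟩).2, congrFun hF₁' ⟨u, hu⟩⟩
  · intro u hu
    rw [hext F₂ u hu]
    exact ⟨(F₂ ⟨u, hu⟩).2, congrFun hF₂' ⟨u, hu⟩⟩
  · intro u hu heq
    rw [hext F₁ u hu, hext F₂ u hu] at heq
    have heq' : F₁ ⟨u, hu⟩ = F₂ ⟨u, hu⟩ := Subtype.ext heq
    have huniq := hcov.existsUnique_continuousMap_lifts ι (a₀ := ⟨u, hu⟩)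
      (e₀ := F₁ ⟨u, hu⟩) (congrFun hF₁' ⟨u, hu⟩) (fun a => a.2)
    have := huniq.unique ⟨rfl, hF₁'⟩ ⟨heq'.symm, hF₂'⟩
    rw [this, hF₂] at hF₁
    exact (congrArg Subtype.val hF₁).symm

lemma locally_injective {f : E → E} {U : Set E} (hU : IsOpen U) (hf : GoodOn f U) :
    ∀ y ∈ U, ∃ W ∈ 𝓝 y, InjOn f W := by
  by_contra hbad
  push Not at hbad
  obtain ⟨q, hqU, hq⟩ := hbad
  let G : Set E := {y | ∃ W ∈ 𝓝 y, InjOn f W}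
  have hG : IsOpen G := by
    rw [isOpen_iff_mem_nhds]
    rintro y ⟨W, hW, hi⟩
    filter_upwards [eventually_mem_nhds_iff.2 hW] with z hz
    exact ⟨W, hz, hi⟩
  let B : Set E := U ∩ Gᶜ
  have hB : IsLocallyClosed B := hU.isLocallyClosed.inter hG.isClosed_compl.isLocallyClosed
  have : LocallyCompactSpace B := hB.locallyCompactSpace
  have : Nonempty B := ⟨⟨q, hqU, fun ⟨W, hW, hi⟩ => hq W hW hi⟩⟩
  let T : ℕ → Set B := fun m => {p | ∀ y ∈ U, ‖y - p‖ < 1 / ((m:ℝ) + 1) →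
    1 / ((m:ℝ) + 1) * ‖y - p‖ ≤ ‖f y - f p‖}
  have hTc : ∀ m, IsClosed (T m) := by
    intro m
    have hfB : Continuous (fun p : B => f p) := (hf.continuousOn.mono inter_subset_left).domRestrict
    have : T m = ⋂ y ∈ U, ({p : B | 1 / ((m:ℝ) + 1) ≤ ‖y - p‖} ∪
        {p : B | 1 / ((m:ℝ) + 1) * ‖y - p‖ ≤ ‖f y - f p‖}) := by
      ext p
      simp only [T, mem_ofPred_eq, mem_iInter, mem_union]
      refine forall₂_congr fun y hy => ?_
      rw [← not_lt (b := 1 / ((m:ℝ) + 1)), imp_iff_not_or]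
    rw [this]
    refine isClosed_biInter fun y _ => IsClosed.union ?_ ?_
    · exact isClosed_le (by fun_prop) (by fun_prop)
    · exact isClosed_le (by fun_prop) (continuous_const.sub hfB).norm
  have hTU : ⋃ m, T m = univ := by
    rw [eq_univ_iff_forall]
    rintro ⟨p, hpU, hpG⟩
    obtain ⟨D, hD, hb⟩ := hf p hpU
    obtain ⟨c, hc, r, hr, h⟩ := lower_bound_at f p D hD hb
    obtain ⟨m, hm⟩ := exists_nat_one_div_lt (lt_min hc hr)
    rw [mem_iUnion]
    refine ⟨m, fun y hy hyp => ?_⟩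
    refine le_trans ?_ (h y (hyp.trans (hm.trans_le (min_le_right _ _))))
    gcongr
    exact (hm.trans_le (min_le_left _ _)).le
  obtain ⟨m, ⟨p₀, hp₀U, hp₀G⟩, hp₀⟩ := nonempty_interior_of_iUnion_of_closed hTc hTU
  set α : ℝ := 1 / ((m:ℝ) + 1) with hα
  have hα0 : 0 < α := by positivity
  obtain ⟨r₁, hr₁, hr₁'⟩ := Metric.mem_nhds_iff.1 (mem_interior_iff_mem_nhds.1 hp₀)
  obtain ⟨r₂, hr₂, hr₂'⟩ := Metric.mem_nhds_iff.1 (hU.mem_nhds hp₀U)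
  obtain ⟨r, hr0, hr⟩ := exists_between (lt_min (lt_min hr₁ hr₂) (half_pos hα0))
  have hrr₁ : r < r₁ := hr.trans_le ((min_le_left _ _).trans (min_le_left _ _))
  have hrr₂ : r < r₂ := hr.trans_le ((min_le_left _ _).trans (min_le_right _ _))
  have hrα : r < α / 2 := hr.trans_le (min_le_right _ _)
  let K := closedBall p₀ r
  have hKc : IsCompact K := isCompact_closedBall _ _
  have hKU : K ⊆ U := (closedBall_subset_ball hrr₂).trans hr₂'
  have hlow : ∀ p ∈ B ∩ K, ∀ y ∈ K, α * ‖y - p‖ ≤ ‖f y - f p‖ := by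
    rintro p ⟨hpB, hpK⟩ y hy
    have : (⟨p, hpB⟩ : B) ∈ T m := hr₁' (by
      rw [mem_ball, Subtype.dist_eq]
      exact (mem_closedBall.1 hpK).trans_lt hrr₁)
    refine this y (hKU hy) ?_
    have h1 := mem_closedBall.1 hy
    have h2 := mem_closedBall.1 hpK
    have h3 := dist_triangle_right y p p₀
    rw [← dist_eq_norm]
    change _ < α
    linarith
  have hp₀K : p₀ ∈ K := mem_closedBall_self hr0.le
  have hp₀B : p₀ ∈ B := ⟨hp₀U, hp₀G⟩
  let A := f '' (B ∩ K)
  have hBK : B ∩ K = K ∩ Gᶜ := by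
    ext y; exact ⟨fun h => ⟨h.2, h.1.2⟩, fun h => ⟨⟨hKU h.1, h.2⟩, h.1⟩⟩
  have hBKc : IsCompact (B ∩ K) := by
    rw [hBK]; exact hKc.inter_right hG.isClosed_compl
  have hA : IsCompact A := hBKc.image_of_continuousOn (hf.continuousOn.mono (inter_subset_right.trans hKU))
  have hf₀A : f p₀ ∈ A := ⟨p₀, ⟨hp₀B, hp₀K⟩, rfl⟩
  have hinj : ∀ y₁ ∈ K, ∀ y₂ ∈ K, f y₁ = f y₂ → f y₁ ∈ ball (f p₀) (α * r / 4) → y₁ = y₂ := by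
    intro y₁ h₁ y₂ h₂ h12 hw
    set w := f y₁ with hwdef
    by_cases hwA : w ∈ A
    · obtain ⟨p, hp, hpw⟩ := hwA
      have e1 := hlow p hp y₁ h₁
      have e2 := hlow p hp y₂ h₂
      rw [hpw, ← hwdef, sub_self, norm_zero] at e1
      rw [hpw, ← h12, sub_self, norm_zero] at e2
      have e1' : ‖y₁ - p‖ ≤ 0 := by by_contra hh; push Not at hh; nlinarith
      have e2' : ‖y₂ - p‖ ≤ 0 := by by_contra hh; push Not at hh; nlinarith
      rw [sub_eq_zero.1 (norm_le_zero_iff.1 e1'), sub_eq_zero.1 (norm_le_zero_iff.1 e2')]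
    obtain ⟨a, haA, haw⟩ := hA.exists_infDist_eq_dist ⟨_, hf₀A⟩ w
    set ρ := dist w a with hρ
    have hρ0 : 0 < ρ := dist_pos.2 (fun h => hwA (h ▸ haA))
    have hρle : ∀ z ∈ A, ρ ≤ dist w z := fun z hz => haw ▸ infDist_le_dist_of_mem hz
    have hρs : ρ < α * r / 4 := (hρle _ hf₀A).trans_lt hw
    have hloc : ∀ y ∈ K, f y ∈ ball w ρ → K ∈ 𝓝 y ∧ ∃ W ∈ 𝓝 y, InjOn f W := by
      intro y hy hyw
      constructor
      · have h3 := hlow p₀ ⟨hp₀B, hp₀K⟩ y hy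
        have h4 : ‖f y - f p₀‖ < α * r / 2 := by
          rw [← dist_eq_norm]
          have := dist_triangle (f y) w (f p₀)
          have h5 := mem_ball.1 hyw
          have h6 := mem_ball.1 hw
          linarith
        have h7 : ‖y - p₀‖ < r := by
          by_contra hh
          push Not at hh
          nlinarith
        exact mem_of_superset (isOpen_ball.mem_nhds (by rwa [mem_ball, dist_eq_norm])) ball_subset_closedBall
      · by_contra hG'
        have : f y ∈ A := ⟨y, ⟨⟨hKU hy, hG'⟩, hy⟩, rfl⟩
        have h8 := hρle _ this
        rw [mem_ball, dist_comm] at hyw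
        linarith
    obtain ⟨s₁, s₂, hs₁c, hs₂c, hs₁, hs₂, hs⟩ := two_sheets hU hf hKc hKU w ρ hloc y₁ y₂ h₁ h₂ h12
      (mem_ball_self hρ0)
    obtain ⟨p, hp, hpa⟩ := haA
    obtain ⟨D, hD, hDb⟩ := hf p hp.1.1
    have hlit := hD.isLittleO.def (c := α / 4) (by positivity)
    obtain ⟨δ, hδ, hδ'⟩ := Metric.eventually_nhds_iff.1 hlit
    obtain ⟨t, ht0, ht⟩ := exists_between (lt_min hρ0 (show 0 < α * δ / 2 by positivity))
    have htρ : t < ρ := ht.trans_le (min_le_left _ _)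
    have htδ : t < α * δ / 2 := ht.trans_le (min_le_right _ _)
    let cc := a + (t / ρ) • (w - a)
    have hwa : ‖w - a‖ = ρ := by rw [hρ, dist_eq_norm]
    have hcca : ‖cc - a‖ = t := by
      simp only [cc, add_sub_cancel_left]
      rw [norm_smul, hwa, Real.norm_of_nonneg (by positivity)]; field_simp
    have hccw : ‖cc - w‖ = ρ - t := by
      have : cc - w = -((1 - t / ρ) • (w - a)) := by
        simp only [cc]; rw [sub_smul, one_smul]; abel
      rw [this, norm_neg, norm_smul, hwa, Real.norm_of_nonneg]
      · field_simp
      · rw [sub_nonneg, div_le_one hρ0]; exact htρ.le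
    have hsub : closedBall cc (t / 2) ⊆ ball w ρ := by
      intro u hu
      have h3 := mem_closedBall.1 hu
      have h4 := dist_triangle u cc w
      rw [dist_eq_norm cc w, hccw] at h4
      rw [mem_ball]; linarith
    have hit : ∀ s : E → E, ContinuousOn s (ball w ρ) → (∀ u ∈ ball w ρ, s u ∈ K ∧ f (s u) = u) →
        ∃ u ∈ ball w ρ, D (s u - p) = cc - a := by
      intro s hsc hsK
      obtain ⟨u, hu, hu'⟩ := near_id_hits cc (t / 2) (by positivity) (fun u => a + D (s u - p))
        (by
          refine continuousOn_const.add (D.continuous.comp_continuousOn ?_)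
          exact (hsc.mono hsub).sub continuousOn_const)
        (by
          intro u hu
          obtain ⟨hk, hfu⟩ := hsK u (hsub hu)
          have h3 := hlow p hp (s u) hk
          rw [hfu, hpa] at h3
          have h4 : ‖u - a‖ ≤ 3 * t / 2 := by
            have h5 := mem_closedBall.1 hu
            have h6 := dist_triangle u cc a
            rw [dist_eq_norm cc a, hcca, dist_eq_norm u a] at h6
            linarith
          have h7 : ‖s u - p‖ < δ := by
            by_contra hh
            push Not at hh
            nlinarith
          have h8 := hδ' (show dist (s u) p < δ by rwa [dist_eq_norm])
          rw [hfu, hpa] at h8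
          have h9 : a + D (s u - p) - u = -(u - a - D (s u - p)) := by abel
          rw [h9, norm_neg]
          linarith)
      refine ⟨u, hsub hu, ?_⟩
      rw [← hu']; simp
    obtain ⟨u₁, hu₁, e₁⟩ := hit s₁ hs₁c hs₁
    obtain ⟨u₂, hu₂, e₂⟩ := hit s₂ hs₂c hs₂
    have e3 : s₁ u₁ = s₂ u₂ := by
      have := hDb.1 (e₁.trans e₂.symm)
      exact sub_left_injective this
    have e4 : u₁ = u₂ := by rw [← (hs₁ u₁ hu₁).2, ← (hs₂ u₂ hu₂).2, e3]
    subst e4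
    exact hs u₁ hu₁ e3
  refine hp₀G ⟨K ∩ f ⁻¹' ball (f p₀) (α * r / 4), ?_, ?_⟩
  · refine inter_mem (closedBall_mem_nhds _ hr0) ?_
    exact (hf.continuousOn.continuousAt (hU.mem_nhds hp₀U)).preimage_mem_nhds
      (ball_mem_nhds _ (by positivity))
  · intro y₁ h₁ y₂ h₂ h12
    exact hinj y₁ h₁.1 y₂ h₂.1 h12 h₁.2
end localinj

/-- Local uniqueness part of the implicit function theorem: there are a neighborhood
`V` of `x₀` and a compact neighborhood `K ⊆ U` of `y₀` such that for every `x ∈ V`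
the equation `f (x, y) = f (x₀, y₀)` has exactly one solution `y ∈ K`. -/
theorem implicit_function_unique_solution
    {n : ℕ} {X : Type*} [TopologicalSpace X] [LocallyPathConnectedSpace X] [T2Space X]
    {U : Set (EuclideanSpace ℝ (Fin n))} (hU : IsOpen U)
    (f : X × EuclideanSpace ℝ (Fin n) → EuclideanSpace ℝ (Fin n))
    (hf : ContinuousOn f ((Set.univ : Set X) ×ˢ U))
    (hdiff : ∀ x : X, ∀ y ∈ U,
      ∃ D : EuclideanSpace ℝ (Fin n) →L[ℝ] EuclideanSpace ℝ (Fin n),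
        HasFDerivAt (fun y' => f (x, y')) D y ∧ Function.Bijective D)
    (x₀ : X) (y₀ : EuclideanSpace ℝ (Fin n)) (hy₀ : y₀ ∈ U) :
    ∃ V ∈ nhds x₀, ∃ K : Set (EuclideanSpace ℝ (Fin n)),
      IsCompact K ∧ K ⊆ U ∧ K ∈ nhds y₀ ∧
      ∀ x ∈ V, ∃! y, y ∈ K ∧ f (x, y) = f (x₀, y₀) := by
  have hgood : ∀ x, GoodOn (fun y => f (x, y)) U := fun x => hdiff x
  set z₀ := f (x₀, y₀) with hz₀
  obtain ⟨W, hW, hWi⟩ := locally_injective hU (hgood x₀) y₀ hy₀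
  obtain ⟨D, hD, hDb⟩ := hdiff x₀ y₀ hy₀
  obtain ⟨c, hc, r₀, hr₀, hlow⟩ := lower_bound_at _ y₀ D hD hDb
  obtain ⟨r₁, hr₁, hr₁'⟩ := Metric.mem_nhds_iff.1 (inter_mem hW (hU.mem_nhds hy₀))
  obtain ⟨r, hr, hrlt⟩ := exists_between (lt_min hr₀ hr₁)
  let K := closedBall y₀ r
  have hK : IsCompact K := isCompact_closedBall _ _
  have hKWU : K ⊆ W ∩ U := (closedBall_subset_ball (hrlt.trans_le (min_le_right _ _))).trans hr₁'
  have hKU : K ⊆ U := fun y hy => (hKWU hy).2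
  have hKi : InjOn (fun y => f (x₀, y)) K := hWi.mono fun y hy => (hKWU hy).1
  have hKn : K ∈ 𝓝 y₀ := closedBall_mem_nhds _ hr
  have hy₀K : y₀ ∈ K := mem_closedBall_self hr.le
  set δ := c * r with hδdef
  have hδ : 0 < δ := by positivity
  have hsph : ∀ y ∈ K, ‖f (x₀, y) - z₀‖ < δ → K ∈ 𝓝 y := by
    intro y hy h
    have h1 : ‖y - y₀‖ ≤ r := by rw [← dist_eq_norm]; exact hy
    have h2 := hlow y (h1.trans_lt (hrlt.trans_le (min_le_left _ _)))
    have h3 : ‖y - y₀‖ < r := by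
      have h4 : c * ‖y - y₀‖ < c * r := h2.trans_lt h
      exact lt_of_mul_lt_mul_left h4 hc.le
    exact mem_of_superset (isOpen_ball.mem_nhds (by rwa [mem_ball, dist_eq_norm])) ball_subset_closedBall
  have hV : ∀ᶠ x in 𝓝 x₀, ∀ y ∈ K, ‖f (x, y) - f (x₀, y)‖ < δ / 4 := by
    have := hK.eventually_forall_of_forall_eventually (x₀ := x₀)
      (P := fun x y => y ∈ U → ‖f (x, y) - f (x₀, y)‖ < δ / 4) (by
        intro y hy
        have hyU := hKU hy
        have hmem : (univ : Set X) ×ˢ U ∈ 𝓝 (x₀, y) := (isOpen_univ.prod hU).mem_nhds ⟨trivial, hyU⟩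
        have h1 : ContinuousAt f (x₀, y) := hf.continuousAt hmem
        have h2 : ContinuousAt (fun q : X × EuclideanSpace ℝ (Fin n) => f (x₀, q.2)) (x₀, y) :=
          ContinuousAt.comp (f := fun q : X × EuclideanSpace ℝ (Fin n) => (x₀, q.2)) h1 (by fun_prop)
        have h3 := (h1.sub h2).norm
        have h4 := h3.eventually_lt_const (u := δ / 4) (by simp; positivity)
        filter_upwards [h4] with q hq _
        exact hq)
    filter_upwards [this] with x hx y hy
    exact hx y hy (hKU hy)
  have hsheet : ∀ x, (∀ y ∈ K, ‖f (x, y) - f (x₀, y)‖ < δ / 4) →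
      ∀ y ∈ K, f (x, y) ∈ ball z₀ (δ / 2) → K ∈ 𝓝 y ∧ ∃ W ∈ 𝓝 y, InjOn (fun y => f (x, y)) W := by
    intro x hx y hy hb
    refine ⟨hsph y hy ?_, locally_injective hU (hgood x) y (hKU hy)⟩
    have h1 := hx y hy
    rw [mem_ball] at hb
    rw [← dist_eq_norm] at h1 ⊢
    have := dist_triangle_left (f (x₀, y)) z₀ (f (x, y))
    linarith
  have hthird : closedBall z₀ (δ / 3) ⊆ ball z₀ (δ / 2) := closedBall_subset_ball (by linarith)
  have hx₀ : ∀ y ∈ K, ‖f (x₀, y) - f (x₀, y)‖ < δ / 4 := by intro y _; simp; positivity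
  refine ⟨_, hV, K, hK, hKU, hKn, fun x hx => ?_⟩
  have hx : ∀ y ∈ K, ‖f (x, y) - f (x₀, y)‖ < δ / 4 := hx
  apply existsUnique_of_exists_of_unique
  · obtain ⟨s, -, hsc, -, hs, -, -⟩ := two_sheets hU (hgood x₀) hK hKU z₀ (δ / 2) (hsheet x₀ hx₀)
      y₀ y₀ hy₀K hy₀K rfl (mem_ball_self (by positivity))
    obtain ⟨u, hu, hu'⟩ := near_id_hits z₀ (δ / 3) (by positivity) (fun u => f (x, s u))
      (((hgood x).continuousOn.mono hKU).comp (hsc.mono hthird) fun u hu => (hs u (hthird hu)).1)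
      (by
        intro u hu
        obtain ⟨h1, h2⟩ := hs u (hthird hu)
        have := hx _ h1
        rw [show f (x₀, s u) = u from h2] at this
        exact this.trans (by linarith))
    exact ⟨s u, (hs u (hthird hu)).1, hu'⟩
  · rintro y₁ y₂ ⟨h₁, e₁⟩ ⟨h₂, e₂⟩
    obtain ⟨s₁, s₂, hs₁c, hs₂c, hs₁, hs₂, hs⟩ := two_sheets hU (hgood x) hK hKU z₀ (δ / 2)
      (hsheet x hx) y₁ y₂ h₁ h₂ (e₁.trans e₂.symm)
      (by rw [e₁]; exact mem_ball_self (by positivity))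
    have hit : ∀ s : EuclideanSpace ℝ (Fin n) → EuclideanSpace ℝ (Fin n),
        ContinuousOn s (ball z₀ (δ / 2)) →
        (∀ u ∈ ball z₀ (δ / 2), s u ∈ K ∧ f (x, s u) = u) →
        ∃ u ∈ ball z₀ (δ / 2), s u = y₀ := by
      intro s hsc hs
      obtain ⟨u, hu, hu'⟩ := near_id_hits z₀ (δ / 3) (by positivity) (fun u => f (x₀, s u))
        (((hgood x₀).continuousOn.mono hKU).comp (hsc.mono hthird) fun u hu => (hs u (hthird hu)).1)
        (by
          intro u hu
          obtain ⟨h1, h2⟩ := hs u (hthird hu)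
          have := hx _ h1
          rw [h2, norm_sub_rev] at this
          exact this.trans (by linarith))
      exact ⟨u, hthird hu, hKi (hs u (hthird hu)).1 hy₀K hu'⟩
    obtain ⟨u₁, hu₁, k₁⟩ := hit s₁ hs₁c hs₁
    obtain ⟨u₂, hu₂, k₂⟩ := hit s₂ hs₂c hs₂
    have e4 : u₁ = u₂ := by rw [← (hs₁ u₁ hu₁).2, ← (hs₂ u₂ hu₂).2, k₁, k₂]
    subst e4
    exact hs u₁ hu₁ (k₁.trans k₂.symm)
end
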